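/- arXiv:1503.02487 — 10 statements merged into one kernel-verified Lean document; each statement's English description precedes it below -/
import Mathlib

section
/- For every 0 ≤ i ≤ n, the smallest positive residue q̄_i satisfies the closed formula q̄_i = d·q_i·(1/(q_0·q_1) + 1/(q_1·q_2) + ⋯ + 1/(q_{i−1}·q_i)) (an identity of rational numbers, the sum being empty for i = 0). -/
/-!
Let `P_0 = 0`, `P_1 = 1`, `P_{i+1} = c_i P_i - P_{i-1}`: the recursion satisfied by the `q_i`, run
with different initial values. Since both sequences satisfy the same recursion,
* the determinant `P_{i+1} q_i - P_i q_{i+1}` is constant, equal to `d` (`hjNum_det`);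
* `q P_i ≡ q_i (mod d)`, because this holds for `i = 0, 1` (`hjNum_cong`).

As `c_i ≥ 2`, the `P_i` increase strictly (`hjNum_lt`), and then the determinant identity forces
`P_i < d` for `i ≤ n`. Since `q` is invertible modulo `d`, the minimal positive solution `q̄_i` of
the congruence is `P_i`. Dividing the determinant identity by `q_i q_{i+1}` gives
`P_{i+1}/q_{i+1} - P_i/q_i = d/(q_i q_{i+1})`, which telescopes to the closed formula.
-/

/-- The sequence `P_0 = 0`, `P_1 = 1`, `P_{i+2} = c_{i+1} P_{i+1} - P_i` attached to the
Hirzebruch–Jung coefficients `c`; these are the numerators of the convergents, with index shifted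
so that `P_i` depends on `c_1, …, c_{i-1}`. -/
def hjNum (C : ℕ → ℤ) : ℕ → ℤ
  | 0 => 0
  | 1 => 1
  | i + 2 => C (i + 1) * hjNum C (i + 1) - hjNum C i

theorem hjNum_det {n : ℕ} {Q C : ℕ → ℤ}
    (hC : ∀ i, i < n → Q i = C (i + 1) * Q (i + 1) - Q (i + 2)) :
    ∀ i, i ≤ n → hjNum C (i + 1) * Q i - hjNum C i * Q (i + 1) = Q 0 := by
  intro i
  induction i with
  | zero => simp [hjNum]
  | succ i ih =>
    intro hi
    have h1 := ih (by omega)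
    have h2 := hC i (by omega)
    have h3 : hjNum C (i + 2) = C (i + 1) * hjNum C (i + 1) - hjNum C i := rfl
    rw [h3]
    rw [h2] at h1
    linear_combination h1

theorem hjNum_cong {n : ℕ} {Q C : ℕ → ℤ}
    (hC : ∀ i, i < n → Q i = C (i + 1) * Q (i + 1) - Q (i + 2)) :
    ∀ i, i ≤ n → Q 0 ∣ Q 1 * hjNum C i - Q i ∧ Q 0 ∣ Q 1 * hjNum C (i + 1) - Q (i + 1) := by
  intro i
  induction i with
  | zero => simp [hjNum]
  | succ i ih =>
    intro hi
    obtain ⟨h0, h1⟩ := ih (by omega)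
    refine ⟨h1, ?_⟩
    have h2 := hC i (by omega)
    have h3 : hjNum C (i + 2) = C (i + 1) * hjNum C (i + 1) - hjNum C i := rfl
    have h4 : Q 1 * hjNum C (i + 2) - Q (i + 2)
        = C (i + 1) * (Q 1 * hjNum C (i + 1) - Q (i + 1)) - (Q 1 * hjNum C i - Q i) := by
      rw [h3]
      linear_combination -h2
    rw [h4]
    exact dvd_sub (Dvd.dvd.mul_left h1 _) h0

theorem hjNum_lt {n : ℕ} {C : ℕ → ℤ} (hC2 : ∀ i, i < n → 2 ≤ C (i + 1)) :
    ∀ i, i ≤ n → 0 ≤ hjNum C i ∧ hjNum C i < hjNum C (i + 1) := by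
  intro i
  induction i with
  | zero => simp [hjNum]
  | succ i ih =>
    intro hi
    obtain ⟨h0, h1⟩ := ih (by omega)
    have h2 := hC2 i (by omega)
    have h3 : hjNum C (i + 2) = C (i + 1) * hjNum C (i + 1) - hjNum C i := rfl
    refine ⟨by omega, ?_⟩
    rw [h3]
    nlinarith

/-- The closed formula for `P_i`, obtained by telescoping the determinant identity. -/
theorem hjNum_closed {n : ℕ} {Q C : ℕ → ℤ} (hpos : ∀ i, i ≤ n → 0 < Q i)
    (hdet : ∀ i, i ≤ n → hjNum C (i + 1) * Q i - hjNum C i * Q (i + 1) = Q 0) :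
    ∀ i, i ≤ n → (hjNum C i : ℚ) = (Q 0 : ℚ) * (Q i : ℚ) *
        ∑ j ∈ Finset.range i, 1 / ((Q j : ℚ) * (Q (j + 1) : ℚ)) := by
  intro i
  induction i with
  | zero => simp [hjNum]
  | succ i ih =>
    intro hi
    have h1 := ih (by omega)
    have h2 : (hjNum C (i + 1) : ℚ) * Q i - hjNum C i * Q (i + 1) = Q 0 := by
      exact_mod_cast hdet i (by omega)
    have h3 : (Q i : ℚ) ≠ 0 := by exact_mod_cast (hpos i (by omega)).ne'
    have h4 : (Q (i + 1) : ℚ) ≠ 0 := by exact_mod_cast (hpos (i + 1) hi).ne'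
    rw [Finset.sum_range_succ]
    generalize ∑ j ∈ Finset.range i, 1 / ((Q j : ℚ) * (Q (j + 1) : ℚ)) = S at h1 ⊢
    field_simp
    rw [h1] at h2
    linear_combination h2

/-- **Hirzebruch–Jung data.** Let `d > q ≥ 1` be coprime integers. The
Hirzebruch–Jung data of `d/q` consists of `q_0 = d > q_1 = q > ⋯ > q_n = 1 > q_{n+1} = 0`
and `c_i ≥ 2` with `q_{i-1} = c_i q_i − q_{i+1}`; `q̄_i` is the smallest positive integer
with `q·q̄_i ≡ q_i (mod d)` (and `q̄_0 = 0`, `q̄_{n+1} = d`).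

**Statement:** for every `0 ≤ i ≤ n`,
`q̄_i = d·q_i·(1/(q_0 q_1) + ⋯ + 1/(q_{i-1} q_i))` as rational numbers. -/
theorem qbar_closed_formula
    (n : ℕ) (d q : ℤ) (Q C Qbar : ℕ → ℤ)
    (hn : 1 ≤ n) (hq1 : 1 ≤ q) (hqd : q < d) (hcop : Int.gcd d q = 1)
    (hQ0 : Q 0 = d) (hQ1 : Q 1 = q) (hQn : Q n = 1) (hQtop : Q (n + 1) = 0)
    (hQdec : ∀ i, i ≤ n → Q (i + 1) < Q i)
    (hC : ∀ i, 1 ≤ i → i ≤ n → Q (i - 1) = C i * Q i - Q (i + 1))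
    (hC2 : ∀ i, 1 ≤ i → i ≤ n → 2 ≤ C i)
    (hQbar0 : Qbar 0 = 0) (hQbarTop : Qbar (n + 1) = d)
    (hQbarPos : ∀ i, 1 ≤ i → i ≤ n → 0 < Qbar i)
    (hQbarCong : ∀ i, 1 ≤ i → i ≤ n → d ∣ q * Qbar i - Q i)
    (hQbarMin : ∀ i, 1 ≤ i → i ≤ n → ∀ t : ℤ, 0 < t → d ∣ q * t - Q i → Qbar i ≤ t) :
    ∀ i, i ≤ n →
      (Qbar i : ℚ) = (d : ℚ) * (Q i : ℚ) *
        ∑ j ∈ Finset.range i, 1 / ((Q j : ℚ) * (Q (j + 1) : ℚ)) := by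
  have hrec : ∀ i, i < n → Q i = C (i + 1) * Q (i + 1) - Q (i + 2) := fun i hi =>
    hC (i + 1) (by omega) (by omega)
  have hpos : ∀ i, i ≤ n → 0 < Q i := by
    intro i hi
    induction hi using Nat.decreasingInduction with
    | self => omega
    | of_succ k hk ih => exact ih.trans (hQdec k (by omega))
  have hdet := hjNum_det hrec
  have hlt := hjNum_lt (n := n) (C := C) fun i hi => hC2 (i + 1) (by omega) (by omega)
  have key : ∀ i, i ≤ n → Qbar i = hjNum C i := by
    intro i hi
    rcases Nat.eq_zero_or_pos i with rfl | hi1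
    · simpa [hjNum] using hQbar0
    have hP : 0 < hjNum C i := by
      obtain ⟨k, rfl⟩ : ∃ k, i = k + 1 := ⟨i - 1, by omega⟩
      have := hlt k (by omega)
      omega
    have hcong : d ∣ q * hjNum C i - Q i := by
      have := (hjNum_cong hrec i hi).1
      rwa [hQ0, hQ1] at this
    have hle := hQbarMin i hi1 hi _ hP hcong
    -- `d = P_{i+1} q_i - P_i q_{i+1} ≥ (P_i + 1) q_i - P_i (q_i - 1) = P_i + q_i`
    have hPd : hjNum C i < d := by
      have h1 := hdet i hi
      have h2 := (hlt i hi).2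
      have h3 := hQdec i hi
      have h4 := hpos i hi
      rw [hQ0] at h1
      nlinarith
    have hdvd : d ∣ q * (hjNum C i - Qbar i) := by
      have := dvd_sub hcong (hQbarCong i hi1 hi)
      have e : q * (hjNum C i - Qbar i) = q * hjNum C i - Q i - (q * Qbar i - Q i) := by ring
      rwa [e]
    have hdvd' : d ∣ hjNum C i - Qbar i :=
      (Int.isCoprime_iff_gcd_eq_one.mpr hcop).dvd_of_dvd_mul_left hdvd
    have h0 := Int.eq_zero_of_dvd_of_nonneg_of_lt (by omega)
      (by have := hQbarPos i hi1 hi; omega) hdvd'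
    omega
  intro i hi
  rw [key i hi, ← hQ0]
  exact hjNum_closed hpos hdet i hi
end

section
/- For all indices 0 ≤ i ≤ n−1 and i ≤ j ≤ n+1, one has q̄_j·q_i − q_j·q̄_i = d·(q̄_{X_i})_{j−i}. -/
/-!
Let `P` be the sequence with `P 0 = 0`, `P 1 = 1`, `P (m+2) = c (m+1) * P (m+1) - P m`, i.e. the
recurrence satisfied by the `q_i`, with different initial values. The number `P m` solves
`q * t ≡ q_m (mod d)`, and `P` increases strictly from `0` to `P (n+1) = d` (the Casoratian
`P (m+1) * q_m - P m * q_{m+1}` is constant, equal to `d`). Solutions being unique modulo `d`, the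
least positive one is `P m`, so `q̄_m = P m` (`eq_hjP_of_least`). The same applies to `X_i`, whose
data are those of `X` with indices shifted by `i`.

For fixed `i`, both sides of the claimed identity then satisfy the same second order recurrence in
`j`, vanish at `j = i`, and equal `d` at `j = i + 1` by constancy of the Casoratian.
-/

/-- The solution of the recurrence `P (m+2) = c (m+1) * P (m+1) - P m` with `P 0 = 0`, `P 1 = 1`:
the numerators attached to the Hirzebruch–Jung coefficients `c 1, c 2, …`
(the value `c 0` is not used). -/
def hjP (c : ℕ → ℤ) : ℕ → ℤ
  | 0 => 0
  | 1 => 1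
  | m + 2 => c (m + 1) * hjP c (m + 1) - hjP c m

theorem hjP_lt_succ (c : ℕ → ℤ) (N : ℕ) (hc2 : ∀ m, m < N → 2 ≤ c (m + 1)) :
    ∀ m, m ≤ N → 0 ≤ hjP c m ∧ hjP c m < hjP c (m + 1) := by
  intro m
  induction m with
  | zero => intro _; simp [hjP]
  | succ k ih =>
    intro hk
    obtain ⟨h0, h1⟩ := ih (by omega)
    have h2 := hc2 k (by omega)
    refine ⟨by omega, ?_⟩
    change _ < c (k + 1) * hjP c (k + 1) - hjP c k
    nlinarith

theorem hjP_casoratian (A c : ℕ → ℤ) (N : ℕ)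
    (hA : ∀ m, m < N → A m = c (m + 1) * A (m + 1) - A (m + 2)) :
    ∀ m, m ≤ N → hjP c (m + 1) * A m - hjP c m * A (m + 1) = A 0 := by
  intro m
  induction m with
  | zero => intro _; simp [hjP]
  | succ k ih =>
    intro hk
    have h1 := ih (by omega)
    have h2 := hA k (by omega)
    change (c (k + 1) * hjP c (k + 1) - hjP c k) * A (k + 1) - hjP c (k + 1) * A (k + 2) = A 0
    rw [← h1, h2]
    ring

theorem hjP_dvd (A c : ℕ → ℤ) (N : ℕ)
    (hA : ∀ m, m < N → A m = c (m + 1) * A (m + 1) - A (m + 2)) :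
    ∀ m, m ≤ N → A 0 ∣ A 1 * hjP c m - A m ∧ A 0 ∣ A 1 * hjP c (m + 1) - A (m + 1) := by
  intro m
  induction m with
  | zero => intro _; simp [hjP]
  | succ k ih =>
    intro hk
    obtain ⟨h0, h1⟩ := ih (by omega)
    refine ⟨h1, ?_⟩
    have h2 := hA k (by omega)
    have h3 := (h1.mul_left (c (k + 1))).sub h0
    change A 0 ∣ A 1 * (c (k + 1) * hjP c (k + 1) - hjP c k) - A (k + 2)
    have h4 : A 1 * (c (k + 1) * hjP c (k + 1) - hjP c k) - A (k + 2)
        = c (k + 1) * (A 1 * hjP c (k + 1) - A (k + 1)) - (A 1 * hjP c k - A k) := by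
      linear_combination -h2
    rwa [h4]

/-- The least positive solutions `B m` of `A 1 * t ≡ A m (mod A 0)`, extended by the boundary
values `B 0 = 0` and `B (N+1) = A 0`, are given by the recurrence `hjP`. -/
theorem eq_hjP_of_least (A c B : ℕ → ℤ) (N : ℕ)
    (hA : ∀ m, m < N → A m = c (m + 1) * A (m + 1) - A (m + 2))
    (hAN : A N = 1) (hAtop : A (N + 1) = 0)
    (hc2 : ∀ m, m < N → 2 ≤ c (m + 1))
    (hB0 : B 0 = 0) (hBtop : B (N + 1) = A 0)
    (hBpos : ∀ m, 1 ≤ m → m ≤ N → 0 < B m)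
    (hBcong : ∀ m, 1 ≤ m → m ≤ N → A 0 ∣ A 1 * B m - A m)
    (hBmin : ∀ m, 1 ≤ m → m ≤ N → ∀ t : ℤ, 0 < t → A 0 ∣ A 1 * t - A m → B m ≤ t) :
    ∀ m, m ≤ N + 1 → B m = hjP c m := by
  have hPtop : hjP c (N + 1) = A 0 := by
    have h := hjP_casoratian A c N hA N le_rfl
    rw [hAN, hAtop] at h
    linarith
  have hlt := hjP_lt_succ c N hc2
  have hlt_top : ∀ k m, m + k = N → hjP c m < A 0 := by
    intro k
    induction k with
    | zero =>
      intro m hm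
      obtain rfl : m = N := by omega
      exact hPtop ▸ (hlt m le_rfl).2
    | succ k ih =>
      intro m hm
      exact (hlt m (by omega)).2.trans (ih (m + 1) (by omega))
  -- `hjP c N` is an inverse of `A 1` modulo `A 0`.
  have hcop : IsCoprime (A 0) (A 1) := by
    obtain ⟨k, hk⟩ := (hjP_dvd A c N hA N le_rfl).1
    rw [hAN] at hk
    exact ⟨-k, hjP c N, by linear_combination hk⟩
  intro m hm
  rcases Nat.eq_zero_or_pos m with rfl | hm1
  · simpa [hjP] using hB0
  rcases Nat.lt_or_ge N m with hNm | hmN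
  · obtain rfl : m = N + 1 := by omega
    rw [hBtop, hPtop]
  have hPpos : 0 < hjP c m := by
    have h := hlt (m - 1) (by omega)
    rw [Nat.sub_add_cancel hm1] at h
    omega
  have hPcong := (hjP_dvd A c N hA m hmN).1
  have hle := hBmin m hm1 hmN _ hPpos hPcong
  have hdvd : A 0 ∣ hjP c m - B m := by
    refine hcop.dvd_of_dvd_mul_left ?_
    have h := hPcong.sub (hBcong m hm1 hmN)
    convert h using 1
    ring
  have hBm := hBpos m hm1 hmN
  have hPm := hlt_top (N - m) m (by omega)
  have := Int.eq_zero_of_dvd_of_nonneg_of_lt (by omega) (by omega) hdvd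
  omega

/-- **Hirzebruch–Jung data** of `d/q` for coprime `d > q ≥ 1`:
`q_0 = d > q_1 = q > ⋯ > q_n = 1 > q_{n+1} = 0`, `c_i ≥ 2` with
`q_{i-1} = c_i q_i − q_{i+1}`; `q̄_i` is the smallest positive integer with
`q·q̄_i ≡ q_i (mod d)` (and `q̄_0 = 0`, `q̄_{n+1} = d`).
For `0 ≤ i ≤ n−1`, `(q̄_{X_i})_0 = 0`, for `1 ≤ m ≤ n−i` the number `(q̄_{X_i})_m`
is the smallest positive integer `t` with `q_{i+1}·t ≡ q_{i+m} (mod q_i)`, and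
`(q̄_{X_i})_{n+1−i} = q_i` (the `q̄`-data of `X_i = X(q_i;1,q_{i+1})`).

**Statement:** for all `0 ≤ i ≤ n−1` and `i ≤ j ≤ n+1`,
`q̄_j·q_i − q_j·q̄_i = d·(q̄_{X_i})_{j−i}`. -/
theorem qbar_cross_identity
    (n : ℕ) (d q : ℤ) (Q C Qbar : ℕ → ℤ) (QbarX : ℕ → ℕ → ℤ)
    (hn : 1 ≤ n) (hq1 : 1 ≤ q) (hqd : q < d) (hcop : Int.gcd d q = 1)
    (hQ0 : Q 0 = d) (hQ1 : Q 1 = q) (hQn : Q n = 1) (hQtop : Q (n + 1) = 0)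
    (hQdec : ∀ i, i ≤ n → Q (i + 1) < Q i)
    (hC : ∀ i, 1 ≤ i → i ≤ n → Q (i - 1) = C i * Q i - Q (i + 1))
    (hC2 : ∀ i, 1 ≤ i → i ≤ n → 2 ≤ C i)
    (hQbar0 : Qbar 0 = 0) (hQbarTop : Qbar (n + 1) = d)
    (hQbarPos : ∀ i, 1 ≤ i → i ≤ n → 0 < Qbar i)
    (hQbarCong : ∀ i, 1 ≤ i → i ≤ n → d ∣ q * Qbar i - Q i)
    (hQbarMin : ∀ i, 1 ≤ i → i ≤ n → ∀ t : ℤ, 0 < t → d ∣ q * t - Q i → Qbar i ≤ t)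
    (hX0 : ∀ i, i + 1 ≤ n → QbarX i 0 = 0)
    (hXtop : ∀ i, i + 1 ≤ n → QbarX i (n + 1 - i) = Q i)
    (hXpos : ∀ i m, i + 1 ≤ n → 1 ≤ m → m ≤ n - i → 0 < QbarX i m)
    (hXcong : ∀ i m, i + 1 ≤ n → 1 ≤ m → m ≤ n - i →
      Q i ∣ Q (i + 1) * QbarX i m - Q (i + m))
    (hXmin : ∀ i m, i + 1 ≤ n → 1 ≤ m → m ≤ n - i →
      ∀ t : ℤ, 0 < t → Q i ∣ Q (i + 1) * t - Q (i + m) → QbarX i m ≤ t) :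
    ∀ i j, i + 1 ≤ n → i ≤ j → j ≤ n + 1 →
      Qbar j * Q i - Q j * Qbar i = d * QbarX i (j - i) := by
  have hA : ∀ m, m < n → Q m = C (m + 1) * Q (m + 1) - Q (m + 2) := fun m hm =>
    hC (m + 1) (by omega) (by omega)
  have hP : ∀ m, m ≤ n + 1 → Qbar m = hjP C m := by
    refine eq_hjP_of_least Q C Qbar n hA hQn hQtop
      (fun m hm => hC2 _ (by omega) (by omega)) hQbar0 (hQbarTop.trans hQ0.symm) hQbarPos ?_ ?_
    · rw [hQ0, hQ1]; exact hQbarCong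
    · rw [hQ0, hQ1]; exact hQbarMin
  intro i j hi hij hj
  -- `X_i` has the data of `X`, shifted by `i`.
  have hPX : ∀ m, m ≤ n - i + 1 → QbarX i m = hjP (fun k => C (i + k)) m :=
    eq_hjP_of_least (fun k => Q (i + k)) (fun k => C (i + k)) (QbarX i) (n - i)
      (fun m hm => hA (i + m) (by omega))
      (by simpa [show i + (n - i) = n by omega] using hQn)
      (by simpa [show i + (n - i + 1) = n + 1 by omega] using hQtop)
      (fun m hm => hC2 _ (by omega) (by omega))
      (hX0 i hi)
      (by simpa [show n + 1 - i = n - i + 1 by omega] using hXtop i hi)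
      (fun m => hXpos i m hi) (fun m => hXcong i m hi) (fun m => hXmin i m hi)
  have key : ∀ m, i + m ≤ n →
      hjP C (i + m) * Q i - Q (i + m) * hjP C i = d * hjP (fun k => C (i + k)) m ∧
      hjP C (i + m + 1) * Q i - Q (i + m + 1) * hjP C i
        = d * hjP (fun k => C (i + k)) (m + 1) := by
    intro m
    induction m with
    | zero =>
      intro _
      have h := hjP_casoratian Q C n hA i (by omega)
      rw [hQ0] at h
      simp only [hjP, add_zero]
      constructor
      · ring
      · linear_combination h
    | succ k ih =>
      intro hk
      obtain ⟨h0, h1⟩ := ih (by omega)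
      refine ⟨h1, ?_⟩
      have h2 := hA (i + k) (by omega)
      change (C (i + k + 1) * hjP C (i + k + 1) - hjP C (i + k)) * Q i - Q (i + k + 2) * hjP C i
        = d * (C (i + k + 1) * hjP (fun k => C (i + k)) (k + 1) - hjP (fun k => C (i + k)) k)
      linear_combination C (i + k + 1) * h1 - h0 - hjP C i * h2
  rw [hP j hj, hP i (by omega), hPX (j - i) (by omega)]
  rcases Nat.eq_or_lt_of_le hij with rfl | hlt
  · simpa using (key 0 (by omega)).1
  · have h := (key (j - i - 1) (by omega)).2
    rwa [show i + (j - i - 1) + 1 = j by omega, show j - i - 1 + 1 = j - i by omega] at h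
end

section
/- For every 1 ≤ i ≤ n, one has q_i = q·q̄_i − d·(q̄_{X_1})_{i−1}. -/
/-!
The minimality conditions on `q̄_i` and `(q̄_{X_1})_{i-1}` match each other. For `i ≥ 2`, consider
pairs `(s, t)` of integers with `q * s - q_i = d * t`. Since `d = c_1 * q - q_2`, reducing modulo
`q` shows that such an `s` exists for a given `t` exactly when `q_2 * t ≡ q_i (mod q)`, and reducing
modulo `d` shows that such a `t` exists for a given `s` exactly when `q * s ≡ q_i (mod d)`. As
`0 < q_i < q`, in every such pair `s` is positive iff `t` is, and `t` increases with `s`. Hence the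
pair with least positive `s` is the pair with least positive `t`, that is,
`(q̄_i, (q̄_{X_1})_{i-1})` is such a pair.
For `i = 1` the identity reads `q = q * 1 - d * 0`.
-/

/-- **Hirzebruch–Jung data** of `d/q` for coprime `d > q ≥ 1`:
`q_0 = d > q_1 = q > ⋯ > q_n = 1 > q_{n+1} = 0`, `c_i ≥ 2` with
`q_{i-1} = c_i q_i − q_{i+1}`; `q̄_i` is the smallest positive integer with
`q·q̄_i ≡ q_i (mod d)` (and `q̄_0 = 0`, `q̄_{n+1} = d`).
`(q̄_{X_i})_0 = 0` and, for `1 ≤ m ≤ n−i`, `(q̄_{X_i})_m` is the smallest positive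
integer `t` with `q_{i+1}·t ≡ q_{i+m} (mod q_i)` (the `q̄`-data of `X_i = X(q_i;1,q_{i+1})`).

**Statement:** for every `1 ≤ i ≤ n`, `q_i = q·q̄_i − d·(q̄_{X_1})_{i−1}`. -/
theorem q_eq_q_mul_qbar_sub
    (n : ℕ) (d q : ℤ) (Q C Qbar : ℕ → ℤ) (QbarX : ℕ → ℕ → ℤ)
    (hn : 1 ≤ n) (hq1 : 1 ≤ q) (hqd : q < d) (hcop : Int.gcd d q = 1)
    (hQ0 : Q 0 = d) (hQ1 : Q 1 = q) (hQn : Q n = 1) (hQtop : Q (n + 1) = 0)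
    (hQdec : ∀ i, i ≤ n → Q (i + 1) < Q i)
    (hC : ∀ i, 1 ≤ i → i ≤ n → Q (i - 1) = C i * Q i - Q (i + 1))
    (hC2 : ∀ i, 1 ≤ i → i ≤ n → 2 ≤ C i)
    (hQbar0 : Qbar 0 = 0) (hQbarTop : Qbar (n + 1) = d)
    (hQbarPos : ∀ i, 1 ≤ i → i ≤ n → 0 < Qbar i)
    (hQbarCong : ∀ i, 1 ≤ i → i ≤ n → d ∣ q * Qbar i - Q i)
    (hQbarMin : ∀ i, 1 ≤ i → i ≤ n → ∀ t : ℤ, 0 < t → d ∣ q * t - Q i → Qbar i ≤ t)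
    (hX0 : ∀ i, i ≤ n → QbarX i 0 = 0)
    (hXpos : ∀ i m, i + 1 ≤ n → 1 ≤ m → m ≤ n - i → 0 < QbarX i m)
    (hXcong : ∀ i m, i + 1 ≤ n → 1 ≤ m → m ≤ n - i →
      Q i ∣ Q (i + 1) * QbarX i m - Q (i + m))
    (hXmin : ∀ i m, i + 1 ≤ n → 1 ≤ m → m ≤ n - i →
      ∀ t : ℤ, 0 < t → Q i ∣ Q (i + 1) * t - Q (i + m) → QbarX i m ≤ t) :
    ∀ i, 1 ≤ i → i ≤ n → Q i = q * Qbar i - d * QbarX 1 (i - 1) := by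
  have hanti : ∀ k i, i + k ≤ n + 1 → Q (i + k) + k ≤ Q i := by
    intro k
    induction k with
    | zero => intro i _; simp
    | succ k ih =>
      intro i hi
      have h1 := ih i (by omega)
      have h2 := hQdec (i + k) (by omega)
      rw [← add_assoc]
      push_cast
      linarith
  have hd : 0 < d := by linarith
  intro i hi hin
  have hQpos : 0 < Q i := by
    have h := hanti (n + 1 - i) i (by omega)
    rw [show i + (n + 1 - i) = n + 1 by omega, hQtop] at h
    omega
  rcases Nat.lt_or_ge 1 i with h2 | h1
  · obtain ⟨m, rfl⟩ : ∃ m, i = 1 + m := ⟨i - 1, by omega⟩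
    have hQlt : Q (1 + m) < q := by
      have h := hanti m 1 (by omega)
      rw [hQ1] at h
      omega
    have hrec : d = C 1 * q - Q 2 := by
      have h := hC 1 le_rfl hn
      simpa [hQ0, hQ1] using h
    have hspos := hQbarPos (1 + m) hi hin
    have htpos := hXpos 1 m (by omega) (by omega) (by omega)
    obtain ⟨k, hk⟩ := hQbarCong (1 + m) hi hin
    obtain ⟨l, hl⟩ := hXcong 1 m (by omega) (by omega) (by omega)
    have hmin := hXmin 1 m (by omega) (by omega) (by omega)
    rw [Nat.add_sub_cancel_left]
    simp only [Nat.reduceAdd, hQ1] at hl hmin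
    set s := Qbar (1 + m)
    set t := QbarX 1 m
    have hkpos : 0 < k := by
      have : 0 < d * k := by nlinarith
      exact pos_of_mul_pos_right this hd.le
    have htk : t ≤ k := by
      refine hmin k hkpos ⟨C 1 * k - s, ?_⟩
      linear_combination k * hrec + hk
    -- The partner of `t` is `s' = c_1 * t - l`, which satisfies `q * s' = d * t + q_i`.
    have hpair : q * (C 1 * t - l) - Q (1 + m) = d * t := by
      linear_combination (-t) * hrec + hl
    have hs'pos : 0 < C 1 * t - l := by
      have : 0 < q * (C 1 * t - l) := by nlinarith [mul_pos hd htpos]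
      exact pos_of_mul_pos_right this (by linarith)
    have hss' : s ≤ C 1 * t - l :=
      hQbarMin (1 + m) hi hin _ hs'pos ⟨t, hpair⟩
    have hkt : k ≤ t := by
      have : d * k ≤ d * t := by nlinarith
      exact le_of_mul_le_mul_left this hd
    have hkt_eq : k = t := le_antisymm hkt htk
    rw [← hkt_eq]
    linarith
  · obtain rfl : i = 1 := by omega
    have hle := hQbarMin 1 le_rfl hn 1 one_pos (by simp [hQ1])
    have hpos := hQbarPos 1 le_rfl hn
    have hone : Qbar 1 = 1 := by omega
    simp [hone, hQ1, hX0 1 hn]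
end

section
/- For all 0 ≤ i ≤ n−2 and 1 ≤ j ≤ n−i−1, one has (q̄_{X_i})_j·(q̄_{X_{i+1}})_j − (q̄_{X_i})_{j+1}·(q̄_{X_{i+1}})_{j−1} = 1. -/
/-!
The numbers `(q̄_{X_i})_m` are continuants: with `K 0 = 0`, `K 1 = 1` and
`K (m + 2) = c_{i+m+1} K (m + 1) - K m` one has `(q̄_{X_i})_m = K m` for `m ≤ n - i`.
Indeed `q_{i+1} K m ≡ q_{i+m} (mod q_i)`, because both sides satisfy the same recurrence, and
`0 < K m < q_i` for `1 ≤ m ≤ n - i`, because `K` is strictly increasing, `q` is strictly decreasing, and the Wronskian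
`K (m + 1) q_{i+m} - K m q_{i+m+1}` is constantly `q_i`. Since `q_{i+1}` is a unit modulo `q_i`,
these two facts single out the smallest positive solution (`eq_hjCont`).

The continuants of `X_i` (shifted by one) and of `X_{i+1}` solve the same second-order recurrence,
so the minor in question is again a constant Wronskian, with value `1` at `j = 1`
(`hjCont_minor`).
-/

/-- The continuant sequence of the tail `C (i+1), C (i+2), …` of a sequence of Hirzebruch–Jung
coefficients: `hjCont C i m` is the numerator of the continued fraction
`[C (i+1), …, C (i+m-1)]`, with the values `0, 1` at `m = 0, 1`. -/
def hjCont (C : ℕ → ℤ) (i : ℕ) : ℕ → ℤ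
  | 0 => 0
  | 1 => 1
  | m + 2 => C (i + m + 1) * hjCont C i (m + 1) - hjCont C i m

lemma hjCont_minor (C : ℕ → ℤ) (i m : ℕ) :
    hjCont C i (m + 1) * hjCont C (i + 1) (m + 1)
      - hjCont C i (m + 2) * hjCont C (i + 1) m = 1 := by
  induction m with
  | zero => simp [hjCont]
  | succ m ih =>
    have hA : hjCont C i (m + 3) = C (i + m + 2) * hjCont C i (m + 2) - hjCont C i (m + 1) := rfl
    have hB : hjCont C (i + 1) (m + 2)
        = C (i + m + 2) * hjCont C (i + 1) (m + 1) - hjCont C (i + 1) m := by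
      rw [hjCont, show i + 1 + m + 1 = i + m + 2 by ring]
    rw [show m + 1 + 2 = m + 3 from rfl, show m + 1 + 1 = m + 2 from rfl, hA, hB]
    linear_combination ih

/-- Coefficients `≥ 2` make the continuants nonnegative and strictly increasing. -/
lemma hjCont_lt {n : ℕ} {C : ℕ → ℤ} (hC2 : ∀ i, 1 ≤ i → i ≤ n → 2 ≤ C i) (i m : ℕ)
    (hm : i + m ≤ n) : 0 ≤ hjCont C i m ∧ hjCont C i m < hjCont C i (m + 1) := by
  induction m with
  | zero => simp [hjCont]
  | succ m ih =>
    obtain ⟨h0, h1⟩ := ih (by omega)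
    have h2 := hC2 (i + m + 1) (by omega) (by omega)
    refine ⟨by omega, ?_⟩
    rw [hjCont]
    nlinarith

/-- The Wronskian of the two solutions `hjCont C i m` and `Q (i + m)` of the recurrence. -/
lemma hjCont_wronskian {n : ℕ} {Q C : ℕ → ℤ}
    (hC : ∀ i, 1 ≤ i → i ≤ n → Q (i - 1) = C i * Q i - Q (i + 1)) (i m : ℕ) (hm : i + m ≤ n) :
    hjCont C i (m + 1) * Q (i + m) - hjCont C i m * Q (i + m + 1) = Q i := by
  induction m with
  | zero => simp [hjCont]
  | succ m ih =>
    have h := hC (i + m + 1) (by omega) (by omega)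
    rw [Nat.add_sub_cancel] at h
    rw [hjCont, show i + (m + 1) = i + m + 1 from rfl]
    linear_combination ih (by omega) - hjCont C i (m + 1) * h

lemma hjCont_cong {n : ℕ} {Q C : ℕ → ℤ}
    (hC : ∀ i, 1 ≤ i → i ≤ n → Q (i - 1) = C i * Q i - Q (i + 1)) (i m : ℕ) (hm : i + m ≤ n) :
    Q i ∣ Q (i + 1) * hjCont C i m - Q (i + m) ∧
      Q i ∣ Q (i + 1) * hjCont C i (m + 1) - Q (i + m + 1) := by
  induction m with
  | zero => simp [hjCont]
  | succ m ih =>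
    obtain ⟨h0, h1⟩ := ih (by omega)
    have h := hC (i + m + 1) (by omega) (by omega)
    rw [Nat.add_sub_cancel] at h
    refine ⟨h1, ?_⟩
    have e : Q (i + 1) * hjCont C i (m + 1 + 1) - Q (i + (m + 1) + 1)
        = C (i + m + 1) * (Q (i + 1) * hjCont C i (m + 1) - Q (i + m + 1))
          - (Q (i + 1) * hjCont C i m - Q (i + m)) := by
      rw [hjCont, show i + (m + 1) = i + m + 1 from rfl]
      linear_combination -h
    rw [e]
    exact dvd_sub (h1.mul_left _) h0

lemma hj_isCoprime {n : ℕ} {Q C : ℕ → ℤ} (h0 : IsCoprime (Q 0) (Q 1))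
    (hC : ∀ i, 1 ≤ i → i ≤ n → Q (i - 1) = C i * Q i - Q (i + 1)) (i : ℕ) (hi : i ≤ n) :
    IsCoprime (Q i) (Q (i + 1)) := by
  induction i with
  | zero => exact h0
  | succ i ih =>
    obtain ⟨a, b, hab⟩ := ih (by omega)
    have h := hC (i + 1) (by omega) hi
    rw [Nat.add_sub_cancel] at h
    exact ⟨b + a * C (i + 1), -a, by linear_combination hab - a * h⟩

/-- The smallest positive solution `t` of `Q (i+1) * t ≡ Q (i+m) (mod Q i)` is the continuant:
the latter is a solution lying strictly between `0` and `Q i`. -/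
lemma eq_hjCont {n : ℕ} {Q C : ℕ → ℤ} (hcop : IsCoprime (Q 0) (Q 1)) (hQtop : Q (n + 1) = 0)
    (hQdec : ∀ i, i ≤ n → Q (i + 1) < Q i)
    (hC : ∀ i, 1 ≤ i → i ≤ n → Q (i - 1) = C i * Q i - Q (i + 1))
    (hC2 : ∀ i, 1 ≤ i → i ≤ n → 2 ≤ C i) {i m : ℕ} (hm1 : 1 ≤ m) (hm : i + m ≤ n) {x : ℤ}
    (hpos : 0 < x) (hcong : Q i ∣ Q (i + 1) * x - Q (i + m))
    (hmin : ∀ t : ℤ, 0 < t → Q i ∣ Q (i + 1) * t - Q (i + m) → x ≤ t) :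
    x = hjCont C i m := by
  have hQnonneg : ∀ k, k ≤ n + 1 → 0 ≤ Q k := by
    intro k hk
    induction hk using Nat.decreasingInduction with
    | self => exact hQtop.ge
    | of_succ k hk ih => exact ih.trans (hQdec k (by omega)).le
  obtain ⟨hK0, hK1⟩ := hjCont_lt hC2 i m hm
  have hKpos : 0 < hjCont C i m := by
    obtain ⟨k, rfl⟩ := Nat.exists_eq_add_of_le' hm1
    obtain ⟨h0, h1⟩ := hjCont_lt hC2 i k (by omega)
    omega
  have hKlt : hjCont C i m < Q i := by
    have hw := hjCont_wronskian hC i m hm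
    have hdec := hQdec (i + m) hm
    have hnn := hQnonneg (i + m + 1) (by omega)
    nlinarith
  have hKc := (hjCont_cong hC i m hm).1
  have hle := hmin _ hKpos hKc
  have hdvd : Q i ∣ hjCont C i m - x := by
    refine (hj_isCoprime hcop hC i (by omega)).dvd_of_dvd_mul_left ?_
    have := dvd_sub hKc hcong
    rwa [show Q (i + 1) * hjCont C i m - Q (i + m) - (Q (i + 1) * x - Q (i + m))
      = Q (i + 1) * (hjCont C i m - x) by ring] at this
  have := Int.eq_zero_of_dvd_of_nonneg_of_lt (by omega) (by omega) hdvd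
  omega

/-- **Hirzebruch–Jung data** of `d/q` for coprime `d > q ≥ 1`:
`q_0 = d > q_1 = q > ⋯ > q_n = 1 > q_{n+1} = 0`, `c_i ≥ 2` with
`q_{i-1} = c_i q_i − q_{i+1}`; `q̄_i` is the smallest positive integer with
`q·q̄_i ≡ q_i (mod d)` (and `q̄_0 = 0`, `q̄_{n+1} = d`).
For `0 ≤ i ≤ n−1`: `(q̄_{X_i})_0 = 0`, for `1 ≤ m ≤ n−i` the number `(q̄_{X_i})_m`
is the smallest positive integer `t` with `q_{i+1}·t ≡ q_{i+m} (mod q_i)`, and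
`(q̄_{X_i})_{n+1−i} = q_i`.

**Statement:** for all `0 ≤ i ≤ n−2` and `1 ≤ j ≤ n−i−1`,
`(q̄_{X_i})_j·(q̄_{X_{i+1}})_j − (q̄_{X_i})_{j+1}·(q̄_{X_{i+1}})_{j−1} = 1`. -/
theorem qbarX_two_by_two_minor
    (n : ℕ) (d q : ℤ) (Q C Qbar : ℕ → ℤ) (QbarX : ℕ → ℕ → ℤ)
    (hn : 1 ≤ n) (hq1 : 1 ≤ q) (hqd : q < d) (hcop : Int.gcd d q = 1)
    (hQ0 : Q 0 = d) (hQ1 : Q 1 = q) (hQn : Q n = 1) (hQtop : Q (n + 1) = 0)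
    (hQdec : ∀ i, i ≤ n → Q (i + 1) < Q i)
    (hC : ∀ i, 1 ≤ i → i ≤ n → Q (i - 1) = C i * Q i - Q (i + 1))
    (hC2 : ∀ i, 1 ≤ i → i ≤ n → 2 ≤ C i)
    (hQbar0 : Qbar 0 = 0) (hQbarTop : Qbar (n + 1) = d)
    (hQbarPos : ∀ i, 1 ≤ i → i ≤ n → 0 < Qbar i)
    (hQbarCong : ∀ i, 1 ≤ i → i ≤ n → d ∣ q * Qbar i - Q i)
    (hQbarMin : ∀ i, 1 ≤ i → i ≤ n → ∀ t : ℤ, 0 < t → d ∣ q * t - Q i → Qbar i ≤ t)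
    (hX0 : ∀ i, i + 1 ≤ n → QbarX i 0 = 0)
    (hXtop : ∀ i, i + 1 ≤ n → QbarX i (n + 1 - i) = Q i)
    (hXpos : ∀ i m, i + 1 ≤ n → 1 ≤ m → m ≤ n - i → 0 < QbarX i m)
    (hXcong : ∀ i m, i + 1 ≤ n → 1 ≤ m → m ≤ n - i →
      Q i ∣ Q (i + 1) * QbarX i m - Q (i + m))
    (hXmin : ∀ i m, i + 1 ≤ n → 1 ≤ m → m ≤ n - i →
      ∀ t : ℤ, 0 < t → Q i ∣ Q (i + 1) * t - Q (i + m) → QbarX i m ≤ t) :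
    ∀ i j, i + 2 ≤ n → 1 ≤ j → j + i + 1 ≤ n →
      QbarX i j * QbarX (i + 1) j - QbarX i (j + 1) * QbarX (i + 1) (j - 1) = 1 := by
  have hcop' : IsCoprime (Q 0) (Q 1) := by
    rw [hQ0, hQ1]
    exact Int.isCoprime_iff_gcd_eq_one.mpr hcop
  have key : ∀ i m, i + 1 ≤ n → i + m ≤ n → QbarX i m = hjCont C i m := by
    intro i m hi hm
    rcases Nat.eq_zero_or_pos m with rfl | hm1
    · exact hX0 i hi
    · exact eq_hjCont hcop' hQtop hQdec hC hC2 hm1 hm (hXpos i m hi hm1 (by omega))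
        (hXcong i m hi hm1 (by omega)) (hXmin i m hi hm1 (by omega))
  intro i j hi hj hij
  obtain ⟨m, rfl⟩ := Nat.exists_eq_add_of_le' hj
  rw [Nat.add_sub_cancel, key i _ (by omega) (by omega), key (i + 1) _ (by omega) (by omega),
    key i _ (by omega) (by omega), key (i + 1) _ (by omega) (by omega)]
  exact hjCont_minor C i m
end

section
/- The greedy algorithm is optimal for the coin system (q_0, q_1, …, q_n) arising from a Hirzebruch–Jung continued fraction: for every integer k ≥ 0, if (g_0, g_1, …, g_n) are the greedy digits of k (g_0 = ⌊k/q_0⌋, and recursively g_i = ⌊r_{i−1}/q_i⌋ where r_{i−1} is the remainder after using coins q_0,…,q_{i−1}), then for every tuple (a_0, a_1, …, a_n) of non-negative integers with a_0·q_0 + a_1·q_1 + ⋯ + a_n·q_n = k one has g_0 + g_1 + ⋯ + g_n ≤ a_0 + a_1 + ⋯ + a_n. -/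
/-!
Write `G_j(k)` for the number of coins the greedy algorithm uses to pay `k` with the coins
`q_j, …, q_n`. It suffices to show that adding one coin to the amount raises the count by at most
one, `G_j(k + q_i) ≤ G_j(k) + 1` for `i ≥ j` (`hjCount_add_le`): building up `k = ∑ a_i q_i` from
`0` coin by coin then gives `G_0(k) ≤ ∑ a_i`.

The inequality is proved by descending induction on `j`. Let `r = k mod q_j`. For `i = j` it is
an equality, and if `r + q_i < q_j` it is the inductive hypothesis applied to `r`. Otherwise the
quotient by `q_j` increases by one, and the claim becomes `G_{j+1}(r + q_i - q_j) ≤ G_{j+1}(r)`.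
Since `q_j = c q_{j+1} - q_{j+2}` with `c ≥ 2`, adding `c` coins `q_{j+1}` gives
`G_{j+1}(r + q_i - q_j) + c = G_{j+1}(r + q_i + q_{j+2}) ≤ G_{j+1}(r) + 2`, by the inductive
hypothesis used twice.
-/

/-- The remainders of the greedy change-making algorithm for the coin system
`Q 0, Q 1, …`: `r_0 = k % Q 0` and `r_{i+1} = r_i % Q (i+1)`. -/
def hjRem (Q : ℕ → ℤ) (k : ℤ) : ℕ → ℤ
  | 0 => k % Q 0
  | i + 1 => hjRem Q k i % Q (i + 1)

/-- The greedy digits for the coin system `Q 0, Q 1, …`: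
`g_0 = ⌊k / Q 0⌋` and `g_{i+1} = ⌊r_i / Q (i+1)⌋`. -/
def hjGreedy (Q : ℕ → ℤ) (k : ℤ) : ℕ → ℤ
  | 0 => k / Q 0
  | i + 1 => hjRem Q k i / Q (i + 1)

/-- The number of coins used by the greedy algorithm on the amount `k` with the `m` coins
`Q 0, …, Q (m - 1)`, by recursion on the coin system: pay with `Q 0` as often as possible and
pass the remainder on to the shifted system. -/
def hjCount : ℕ → (ℕ → ℤ) → ℤ → ℤ
  | 0, _, _ => 0
  | m + 1, Q, k => k / Q 0 + hjCount m (fun i => Q (i + 1)) (k % Q 0)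

lemma hjRem_shift (Q : ℕ → ℤ) (k : ℤ) (i : ℕ) :
    hjRem Q k (i + 1) = hjRem (fun j => Q (j + 1)) (k % Q 0) i := by
  induction i with
  | zero => rfl
  | succ i ih => rw [hjRem, ih, hjRem]

lemma hjGreedy_shift (Q : ℕ → ℤ) (k : ℤ) (i : ℕ) :
    hjGreedy Q k (i + 1) = hjGreedy (fun j => Q (j + 1)) (k % Q 0) i := by
  cases i with
  | zero => rfl
  | succ i => rw [hjGreedy, hjRem_shift, hjGreedy]

lemma sum_hjGreedy (m : ℕ) (Q : ℕ → ℤ) (k : ℤ) :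
    ∑ i ∈ Finset.range m, hjGreedy Q k i = hjCount m Q k := by
  induction m generalizing Q k with
  | zero => rfl
  | succ m ih =>
    rw [Finset.sum_range_succ', hjCount, ← ih, add_comm]
    simp only [hjGreedy_shift]
    rfl

lemma hjCount_zero (m : ℕ) (Q : ℕ → ℤ) : hjCount m Q 0 = 0 := by
  induction m generalizing Q with
  | zero => rfl
  | succ m ih => simp [hjCount, ih]

lemma hjCount_add_mul (m : ℕ) (Q : ℕ → ℤ) (hQ : 0 < Q 0) (k c : ℤ) :
    hjCount (m + 1) Q (k + c * Q 0) = hjCount (m + 1) Q k + c := by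
  simp only [hjCount]
  rw [Int.add_mul_ediv_right _ _ hQ.ne', Int.add_mul_emod_self_right]
  ring

/-- Adding one coin to the amount raises the greedy count by at most one. The index `i = m`, where
the coin is `Q m = 0`, is included so that the relation `Q i = c * Q (i + 1) - Q (i + 2)` can be
used up to the end of the system. -/
lemma hjCount_add_le (m : ℕ) (Q : ℕ → ℤ) (htop : Q m = 0)
    (hpos : ∀ i, i < m → 0 < Q i)
    (hdec : ∀ i, i < m → Q (i + 1) < Q i)
    (hC : ∀ i, i + 2 ≤ m → ∃ c, 2 ≤ c ∧ Q i = c * Q (i + 1) - Q (i + 2))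
    (i : ℕ) (hi : i ≤ m) (k : ℤ) :
    hjCount m Q (k + Q i) ≤ hjCount m Q k + 1 := by
  induction m generalizing Q i k with
  | zero => simp [hjCount]
  | succ m ih =>
    have h0 : 0 < Q 0 := hpos 0 (by omega)
    cases i with
    | zero =>
      have h := hjCount_add_mul m Q h0 k 1
      rw [one_mul] at h
      exact h.le
    | succ i =>
      have IH := ih (fun j => Q (j + 1)) htop (fun j hj => hpos _ (by omega))
        (fun j hj => hdec _ (by omega)) (fun j hj => hC _ (by omega))
      have hnn : 0 ≤ Q (i + 1) := by
        rcases Nat.lt_or_ge (i + 1) (m + 1) with h | h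
        · exact (hpos _ h).le
        · rw [show i + 1 = m + 1 by omega, htop]
      have hlt : ∀ j, j ≤ m → Q (j + 1) < Q 0 := by
        intro j
        induction j with
        | zero => exact fun hj => hdec 0 (by omega)
        | succ j ihj => exact fun hj => (hdec (j + 1) (by omega)).trans (ihj (by omega))
      have hiQ := hlt i (by omega)
      have hr0 := Int.emod_nonneg k h0.ne'
      have hr1 := Int.emod_lt_of_pos k h0
      have hk := Int.emod_add_mul_ediv k (Q 0)
      simp only [hjCount]
      set r := k % Q 0
      set e := k / Q 0
      rcases lt_or_ge (r + Q (i + 1)) (Q 0) with hcase | hcase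
      · have hkq : k + Q (i + 1) = (r + Q (i + 1)) + e * Q 0 := by linarith
        rw [hkq, Int.add_mul_ediv_right _ _ h0.ne', Int.add_mul_emod_self_right,
          Int.ediv_eq_zero_of_lt (by omega) hcase, Int.emod_eq_of_lt (by omega) hcase]
        linarith [IH i (by omega) r]
      · have hkq : k + Q (i + 1) = (r + Q (i + 1) - Q 0) + (e + 1) * Q 0 := by linarith
        rw [hkq, Int.add_mul_ediv_right _ _ h0.ne', Int.add_mul_emod_self_right,
          Int.ediv_eq_zero_of_lt (by omega) (by omega),
          Int.emod_eq_of_lt (by omega) (by omega)]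
        -- With a single coin, `Q (i + 1) = 0` and no carry can occur.
        obtain _ | m := m
        · obtain rfl : i = 0 := by omega
          rw [htop] at hcase
          omega
        obtain ⟨c, hc, hQ⟩ := hC 0 (by omega)
        have hshift := hjCount_add_mul m (fun j => Q (j + 1)) (hpos 1 (by omega))
          (r + Q (i + 1) - Q 0) c
        have heq : r + Q (i + 1) - Q 0 + c * Q (0 + 1) = r + Q (i + 1) + Q (1 + 1) := by
          rw [hQ]; ring
        simp only [heq] at hshift
        have h1 := IH i (by omega) r
        have h2 := IH 1 (by omega) (r + Q (i + 1))
        linarith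

/-- **Hirzebruch–Jung data** of `d/q` for coprime `d > q ≥ 1`:
`q_0 = d > q_1 = q > ⋯ > q_n = 1 > q_{n+1} = 0`, `c_i ≥ 2` with
`q_{i-1} = c_i q_i − q_{i+1}`.

**Statement:** the greedy algorithm is optimal for the coin system
`(q_0, …, q_n)`: for every `k ≥ 0` and every tuple `(a_0, …, a_n)` of
non-negative integers with `Σ a_i q_i = k`, the greedy digits `(g_0, …, g_n)`
of `k` satisfy `Σ g_i ≤ Σ a_i`. -/
theorem greedy_is_optimal_for_HJ_coins
    (n : ℕ) (d q : ℤ) (Q C : ℕ → ℤ)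
    (hn : 1 ≤ n) (hq1 : 1 ≤ q) (hqd : q < d) (hcop : Int.gcd d q = 1)
    (hQ0 : Q 0 = d) (hQ1 : Q 1 = q) (hQn : Q n = 1) (hQtop : Q (n + 1) = 0)
    (hQdec : ∀ i, i ≤ n → Q (i + 1) < Q i)
    (hC : ∀ i, 1 ≤ i → i ≤ n → Q (i - 1) = C i * Q i - Q (i + 1))
    (hC2 : ∀ i, 1 ≤ i → i ≤ n → 2 ≤ C i)
    (k : ℤ) (hk : 0 ≤ k)
    (a : ℕ → ℤ) (ha : ∀ i, i ≤ n → 0 ≤ a i)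
    (hsum : ∑ i ∈ Finset.range (n + 1), a i * Q i = k) :
    ∑ i ∈ Finset.range (n + 1), hjGreedy Q k i ≤ ∑ i ∈ Finset.range (n + 1), a i := by
  have hpos : ∀ i, i ≤ n → 0 < Q i := by
    intro i hi
    induction hi using Nat.decreasingInduction with
    | self => omega
    | of_succ j hj ihj => exact ihj.trans (hQdec j (by omega))
  have step := hjCount_add_le (n + 1) Q hQtop (fun i hi => hpos i (by omega))
    (fun i hi => hQdec i (by omega))
    (fun i hi => ⟨C (i + 1), hC2 _ (by omega) (by omega), hC (i + 1) (by omega) (by omega)⟩)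
  have steps : ∀ i, i ≤ n → ∀ (t : ℕ) (x : ℤ),
      hjCount (n + 1) Q (x + t * Q i) ≤ hjCount (n + 1) Q x + t := by
    intro i hi t x
    induction t with
    | zero => simp
    | succ t ih =>
      have h := step i (by omega) (x + t * Q i)
      have hx : x + ((t + 1 : ℕ) : ℤ) * Q i = x + t * Q i + Q i := by push_cast; ring
      rw [hx]
      push_cast
      linarith
  have total : ∀ m, m ≤ n + 1 →
      hjCount (n + 1) Q (∑ i ∈ Finset.range m, a i * Q i) ≤ ∑ i ∈ Finset.range m, a i := by
    intro m hm
    induction m with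
    | zero => simp [hjCount_zero]
    | succ m ih =>
      have h := steps m (by omega) (a m).toNat (∑ i ∈ Finset.range m, a i * Q i)
      rw [Int.toNat_of_nonneg (ha m (by omega))] at h
      rw [Finset.sum_range_succ, Finset.sum_range_succ]
      linarith [ih (by omega)]
  rw [sum_hjGreedy, ← hsum]
  exact total (n + 1) le_rfl
end

section
/- Let d ≥ 1 and a, b, p, q be integers with p, q ≥ 1 and gcd(d, a, b) = 1, and set e := gcd(d, p·b − q·a). Then for all integers u, v: if d divides a·u + b·v, then e divides p·u + q·v. Consequently, if i₀, j₀ are integers and ν := p·i₀ + q·j₀, k := a·i₀ + b·j₀, then {(i,j) ∈ ℤ² : p·i + q·j ≤ ν and a·i + b·j ≡ k (mod d)} = {(i,j) ∈ ℤ² : p·i + q·j ≤ ν, p·i + q·j ≡ ν (mod e), and a·i + b·j ≡ k (mod d)}. -/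
/-!
Put `w := p·u + q·v`, `D := p·b − q·a` and `e := gcd(d, D)`. If `d ∣ a·u + b·v`, then `e` divides
`a·w = p·(a·u + b·v) − v·D` and `b·w = q·(a·u + b·v) + u·D`, and of course `d·w`. Since
`gcd(d, a, b) = 1`, Bézout writes `w` as an integer combination of `d·w`, `a·w`, `b·w`, so `e ∣ w`
(`gcd_dvd_of_dvd`). Applied to `(u, v) = (i − i₀, j − j₀)`, this says that the congruence modulo `e`
is implied by the one modulo `d`, which gives the equality of sets.
-/

theorem gcd_dvd_of_dvd (d a b p q u v : ℤ)
    (hgcd : Int.gcd (Int.gcd d a : ℤ) b = 1) (h : d ∣ a * u + b * v) :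
    (Int.gcd d (p * b - q * a) : ℤ) ∣ p * u + q * v := by
  have hed : (Int.gcd d (p * b - q * a) : ℤ) ∣ d := Int.gcd_dvd_left ..
  have heD : (Int.gcd d (p * b - q * a) : ℤ) ∣ p * b - q * a := Int.gcd_dvd_right ..
  generalize (Int.gcd d (p * b - q * a) : ℤ) = e at *
  have hN : e ∣ a * u + b * v := hed.trans h
  have ha : e ∣ a * (p * u + q * v) := by
    rw [show a * (p * u + q * v) = p * (a * u + b * v) - v * (p * b - q * a) by ring]
    exact dvd_sub (hN.mul_left p) (heD.mul_left v)
  have hb : e ∣ b * (p * u + q * v) := by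
    rw [show b * (p * u + q * v) = q * (a * u + b * v) + u * (p * b - q * a) by ring]
    exact dvd_add (hN.mul_left q) (heD.mul_left u)
  have bezout₁ := Int.gcd_eq_gcd_ab d a
  have bezout₂ := Int.gcd_eq_gcd_ab (Int.gcd d a : ℤ) b
  rw [hgcd] at bezout₂
  generalize Int.gcdA (Int.gcd d a : ℤ) b = x at bezout₂
  generalize Int.gcdB (Int.gcd d a : ℤ) b = y at bezout₂
  rw [bezout₁] at bezout₂
  push_cast at bezout₂
  have hw : p * u + q * v = Int.gcdA d a * x * (d * (p * u + q * v)) +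
      Int.gcdB d a * x * (a * (p * u + q * v)) + y * (b * (p * u + q * v)) := by
    linear_combination (p * u + q * v) * bezout₂
  rw [hw]
  exact dvd_add (dvd_add ((hed.mul_right _).mul_left _) (ha.mul_left _)) (hb.mul_left _)

/-- Let `d ≥ 1` and `a, b, p, q` be integers with `p, q ≥ 1` and `gcd(d,a,b) = 1`,
and set `e := gcd(d, p·b − q·a)`.  Then whenever `d ∣ a·u + b·v` one has
`e ∣ p·u + q·v`.  Consequently, for integers `i₀, j₀`, setting `ν := p·i₀ + q·j₀`
and `k := a·i₀ + b·j₀`, the set of `(i,j)` with `p·i + q·j ≤ ν` and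
`a·i + b·j ≡ k (mod d)` coincides with the set of `(i,j)` with `p·i + q·j ≤ ν`,
`p·i + q·j ≡ ν (mod e)` and `a·i + b·j ≡ k (mod d)`. -/
theorem lattice_congruence_refinement
    (d a b p q : ℤ) (hd : 1 ≤ d) (hp : 1 ≤ p) (hq : 1 ≤ q)
    (hgcd : Int.gcd (Int.gcd d a : ℤ) b = 1) :
    (∀ u v : ℤ, d ∣ a * u + b * v →
      (Int.gcd d (p * b - q * a) : ℤ) ∣ p * u + q * v) ∧
    (∀ i₀ j₀ : ℤ,
      {ij : ℤ × ℤ | p * ij.1 + q * ij.2 ≤ p * i₀ + q * j₀ ∧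
          d ∣ (a * ij.1 + b * ij.2) - (a * i₀ + b * j₀)}
        =
      {ij : ℤ × ℤ | p * ij.1 + q * ij.2 ≤ p * i₀ + q * j₀ ∧
          (Int.gcd d (p * b - q * a) : ℤ) ∣ (p * ij.1 + q * ij.2) - (p * i₀ + q * j₀) ∧
          d ∣ (a * ij.1 + b * ij.2) - (a * i₀ + b * j₀)}) := by
  refine ⟨fun u v h => gcd_dvd_of_dvd d a b p q u v hgcd h, fun i₀ j₀ => ?_⟩
  ext ⟨i, j⟩
  simp only [Set.mem_ofPred_eq]
  refine ⟨fun ⟨hle, hdvd⟩ => ⟨hle, ?_, hdvd⟩, fun ⟨hle, _, hdvd⟩ => ⟨hle, hdvd⟩⟩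
  have key := gcd_dvd_of_dvd d a b p q (i - i₀) (j - j₀) hgcd (by
    convert hdvd using 1
    ring)
  convert key using 1
  ring
end

section
/- Let 0 < k < d and let (k_1, …, k_n) be the greedy X-decomposition of k. Then the affine lattice 𝕃(k) is exactly the Minkowski sum of k_1 copies of 𝕃(q_1), k_2 copies of 𝕃(q_2), …, and k_n copies of 𝕃(q_n); that is, (r,s) ∈ 𝕃(k) if and only if there exist points (r_{i,l}, s_{i,l}) ∈ 𝕃(q_i) for 1 ≤ i ≤ n and 1 ≤ l ≤ k_i whose componentwise sum is (r,s). (This is the monomial-lattice form of the eigenmodule decomposition 𝒪_X(k) = ⊗_{i=1}^n 𝒪_X(q_i)^{k_i}.) -/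
/-- The dual Hirzebruch–Jung sequence `p_0 = 0`, `p_1 = 1`, `p_{i+2} = c_{i+1} p_{i+1} - p_i`. -/
def hjDual (C : ℕ → ℤ) : ℕ → ℤ
  | 0 => 0
  | 1 => 1
  | i + 2 => C (i + 1) * hjDual C (i + 1) - hjDual C i

/-- `(r, s) ∈ 𝕃(m)`, where for `m = 0` only the origin is admitted: the condition on the point that
remains to be decomposed once the remaining value is `m`. -/
def HJRest (d q m r s : ℤ) : Prop :=
  0 ≤ r ∧ 0 ≤ s ∧ d ∣ r + q * s - m ∧ (m = 0 → r = 0 ∧ s = 0)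

lemma hjDual_mono {n : ℕ} {C : ℕ → ℤ} (hC2 : ∀ i, 1 ≤ i → i ≤ n → 2 ≤ C i) :
    ∀ i, i ≤ n → 0 ≤ hjDual C i ∧ hjDual C i < hjDual C (i + 1) := by
  intro i
  induction i with
  | zero => intro _; simp [hjDual]
  | succ i ih =>
    intro hi
    obtain ⟨h0, h1⟩ := ih (by omega)
    have h2 := hC2 (i + 1) (by omega) hi
    refine ⟨by omega, ?_⟩
    change _ < C (i + 1) * hjDual C (i + 1) - hjDual C i
    nlinarith

lemma hjDual_det {n : ℕ} {d : ℤ} {Q C : ℕ → ℤ} (hQ0 : Q 0 = d)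
    (hC : ∀ i, 1 ≤ i → i ≤ n → Q (i - 1) = C i * Q i - Q (i + 1)) :
    ∀ i, i ≤ n → Q i * hjDual C (i + 1) - Q (i + 1) * hjDual C i = d := by
  intro i
  induction i with
  | zero => intro _; simp [hjDual, hQ0]
  | succ i ih =>
    intro hi
    have h1 := ih (by omega)
    have h2 := hC (i + 1) (by omega) hi
    simp only [Nat.add_sub_cancel] at h2
    change Q (i + 1) * (C (i + 1) * hjDual C (i + 1) - hjDual C i) - _ = d
    rw [← h1, h2]
    ring

lemma hjDual_dvd {n : ℕ} {d q : ℤ} {Q C : ℕ → ℤ} (hQ0 : Q 0 = d) (hQ1 : Q 1 = q)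
    (hC : ∀ i, 1 ≤ i → i ≤ n → Q (i - 1) = C i * Q i - Q (i + 1)) :
    ∀ i, i ≤ n → d ∣ q * hjDual C i - Q i ∧ d ∣ q * hjDual C (i + 1) - Q (i + 1) := by
  intro i
  induction i with
  | zero => intro _; simp [hjDual, hQ0, hQ1]
  | succ i ih =>
    intro hi
    obtain ⟨h0, h1⟩ := ih (by omega)
    refine ⟨h1, ?_⟩
    have h2 := hC (i + 1) (by omega) hi
    simp only [Nat.add_sub_cancel] at h2
    change d ∣ q * (C (i + 1) * hjDual C (i + 1) - hjDual C i) - _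
    have h3 := dvd_sub (h1.mul_left (C (i + 1))) h0
    exact h3.trans (dvd_of_eq (by rw [h2]; ring))

/-- With `(u, -p)`, `(v, -p')` a basis of `{(x, y) : x + q y ≡ 0 (mod d)}`, `u > v`, `p < p'`, this
lattice has no point `(x, -y)` with `0 < x < u` and `0 ≤ y < p'`. -/
lemma no_small_lattice_point {d q u v p p' x y : ℤ} (hd : 0 < d) (hv : 0 ≤ v) (huv : v < u)
    (hp : 0 ≤ p) (hpp : p < p') (hdet : u * p' - v * p = d)
    (h1 : d ∣ q * p - u) (h2 : d ∣ q * p' - v) (hxy : d ∣ x - q * y)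
    (hx0 : 0 < x) (hxu : x < u) (hy0 : 0 ≤ y) (hyp : y < p') : False := by
  -- `a`, `b` are the coordinates of `(x, -y)` in the basis, found by Cramer's rule.
  obtain ⟨a, ha⟩ : d ∣ x * p' - y * v := by
    have := dvd_add (hxy.mul_left p') (h2.mul_left y)
    exact this.trans (dvd_of_eq (by ring))
  obtain ⟨b, hb⟩ : d ∣ y * u - x * p := by
    have := dvd_add (hxy.mul_left p) (h1.mul_left y)
    rw [← dvd_neg]
    exact this.trans (dvd_of_eq (by ring))
  have hx : x = a * u + b * v := by
    apply mul_left_cancel₀ hd.ne'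
    linear_combination (-x) * hdet + u * ha + v * hb
  have hy : y = a * p + b * p' := by
    apply mul_left_cancel₀ hd.ne'
    linear_combination (-y) * hdet + p * ha + p' * hb
  rcases lt_trichotomy a 0 with h | h | h
  · have hab : 1 ≤ a + b := by
      by_contra hcon
      nlinarith
    nlinarith
  · subst h
    have : 1 ≤ b := by
      by_contra hcon
      nlinarith
    nlinarith
  · rcases le_or_gt 0 b with h' | h'
    · nlinarith
    · have hab : 1 ≤ a + b := by
        by_contra hcon
        nlinarith
      nlinarith

lemma le_or_le_of_mem {d q u v p p' m r s : ℤ} (hd : 0 < d) (hv : 0 ≤ v) (huv : v < u)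
    (hp : 0 ≤ p) (hpp : p < p') (hdet : u * p' - v * p = d)
    (h1 : d ∣ q * p - u) (h2 : d ∣ q * p' - v) (hvm : v ≤ m) (hmu : m < u)
    (hr : 0 ≤ r) (hs : 0 ≤ s) (h : d ∣ r + q * s - m) : v ≤ r ∨ p' ≤ s := by
  by_contra! hcon
  refine no_small_lattice_point (x := m - r) (y := s) hd hv huv hp hpp hdet h1 h2 ?_
    (by omega) (by omega) hs hcon.2
  rw [← dvd_neg]
  exact h.trans (dvd_of_eq (by ring))

/-- Splitting off one point of `𝕃(v)`, for consecutive terms `u > v` of the sequence `q_i`. -/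
lemma HJRest.split {d q u v p p' m r s : ℤ} (hd : 0 < d) (hv : 0 < v) (huv : v < u)
    (hp : 0 ≤ p) (hpp : p < p') (hdet : u * p' - v * p = d)
    (h1 : d ∣ q * p - u) (h2 : d ∣ q * p' - v) (hvm : v ≤ m) (hmu : m < u)
    (h : HJRest d q m r s) :
    ∃ a b, (0 ≤ a ∧ 0 ≤ b ∧ d ∣ a + q * b - v) ∧ HJRest d q (m - v) (r - a) (s - b) := by
  obtain ⟨hr, hs, hdvd, -⟩ := h
  rcases hvm.eq_or_lt with rfl | hlt
  · exact ⟨r, s, ⟨hr, hs, hdvd⟩, by simp [HJRest]⟩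
  rcases le_or_le_of_mem hd hv.le huv hp hpp hdet h1 h2 hvm hmu hr hs hdvd with h | h
  · refine ⟨v, 0, ⟨hv.le, le_rfl, by simp⟩, by omega, by omega, ?_, by omega⟩
    exact hdvd.trans (dvd_of_eq (by ring))
  · refine ⟨0, p', ⟨le_rfl, by omega, by simpa using h2⟩, by omega, by omega, ?_, by omega⟩
    exact (dvd_sub hdvd h2).trans (dvd_of_eq (by ring))

/-- Splitting off `g` points of `𝕃(v)` successively. -/
lemma HJRest.split_many {d q u v p p' t : ℤ} (hd : 0 < d) (hv : 0 < v) (huv : v < u)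
    (hp : 0 ≤ p) (hpp : p < p') (hdet : u * p' - v * p = d)
    (h1 : d ∣ q * p - u) (h2 : d ∣ q * p' - v) (ht : 0 ≤ t) (g : ℕ) :
    ∀ r s, g * v + t < u → HJRest d q (g * v + t) r s →
    ∃ ρ σ : ℕ → ℤ, (∀ l ∈ Finset.range g, 0 ≤ ρ l ∧ 0 ≤ σ l ∧ d ∣ ρ l + q * σ l - v) ∧
      HJRest d q t (r - ∑ l ∈ Finset.range g, ρ l) (s - ∑ l ∈ Finset.range g, σ l) := by
  induction g with
  | zero =>
    intro r s _ h
    exact ⟨0, 0, by simp, by simpa using h⟩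
  | succ g ih =>
    intro r s hlt h
    push_cast at hlt h
    have hg : 0 ≤ (g : ℤ) * v := by positivity
    have hm : ((g : ℤ) + 1) * v + t = g * v + t + v := by ring
    rw [hm] at hlt h
    obtain ⟨a, b, hab, hrest⟩ := h.split hd hv huv hp hpp hdet h1 h2 (by omega) hlt
    rw [add_sub_cancel_right] at hrest
    obtain ⟨ρ, σ, hmem, hres⟩ := ih (r - a) (s - b) (by omega) hrest
    refine ⟨fun l => if l = g then a else ρ l, fun l => if l = g then b else σ l, ?_, ?_⟩
    · intro l hl
      by_cases hlg : l = g
      · simpa [hlg] using hab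
      · simpa [hlg] using hmem l (by simp at hl ⊢; omega)
    · have hsum : ∀ (f : ℕ → ℤ) (c : ℤ), ∑ l ∈ Finset.range (g + 1), (if l = g then c else f l)
          = ∑ l ∈ Finset.range g, f l + c := by
        intro f c
        rw [Finset.sum_range_succ, if_pos rfl]
        congr 1
        refine Finset.sum_congr rfl fun l hl => if_neg ?_
        simp at hl
        omega
      rw [hsum, hsum]
      convert hres using 1 <;> ring

/-- **Hirzebruch–Jung data** of `d/q` for coprime `d > q ≥ 1`:
`q_0 = d > q_1 = q > ⋯ > q_n = 1 > q_{n+1} = 0`, `c_i ≥ 2` with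
`q_{i-1} = c_i q_i − q_{i+1}`.  For `0 ≤ m`, `𝕃(m)` is the affine lattice
`{(r,s) ∈ ℤ≥0² : r + q·s ≡ m (mod d)}`.

**Statement:** for `0 < k < d` with greedy `X`-decomposition `(k_1, …, k_n)`,
the lattice `𝕃(k)` is the Minkowski sum of `k_i` copies of `𝕃(q_i)` for
`1 ≤ i ≤ n`:  `(r,s) ∈ 𝕃(k)` iff there are points `(ρ_{i,l}, σ_{i,l}) ∈ 𝕃(q_i)`
(`1 ≤ i ≤ n`, `0 ≤ l < k_i`) whose componentwise sum is `(r,s)`.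
(Monomial-lattice form of `𝒪_X(k) = ⊗_{i=1}^n 𝒪_X(q_i)^{k_i}`.) -/
theorem eigenmodule_decomposition_lattice
    (n : ℕ) (d q : ℤ) (Q C : ℕ → ℤ)
    (hn : 1 ≤ n) (hq1 : 1 ≤ q) (hqd : q < d) (hcop : Int.gcd d q = 1)
    (hQ0 : Q 0 = d) (hQ1 : Q 1 = q) (hQn : Q n = 1) (hQtop : Q (n + 1) = 0)
    (hQdec : ∀ i, i ≤ n → Q (i + 1) < Q i)
    (hC : ∀ i, 1 ≤ i → i ≤ n → Q (i - 1) = C i * Q i - Q (i + 1))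
    (hC2 : ∀ i, 1 ≤ i → i ≤ n → 2 ≤ C i)
    (k : ℤ) (hk0 : 0 < k) (hkd : k < d) :
    ∀ r s : ℤ,
      (0 ≤ r ∧ 0 ≤ s ∧ d ∣ r + q * s - k) ↔
      ∃ ρ σ : ℕ → ℕ → ℤ,
        (∀ i ∈ Finset.Icc 1 n, ∀ l ∈ Finset.range (hjGreedy Q k i).toNat,
          0 ≤ ρ i l ∧ 0 ≤ σ i l ∧ d ∣ ρ i l + q * σ i l - Q i) ∧
        r = ∑ i ∈ Finset.Icc 1 n, ∑ l ∈ Finset.range (hjGreedy Q k i).toNat, ρ i l ∧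
        s = ∑ i ∈ Finset.Icc 1 n, ∑ l ∈ Finset.range (hjGreedy Q k i).toNat, σ i l := by
  have hd : 0 < d := by omega
  have hQpos : ∀ i, i ≤ n → 0 < Q i := by
    intro i hi
    induction hi using Nat.decreasingInduction with
    | self => omega
    | of_succ i hi ih => exact ih.trans (hQdec i hi.le)
  have hrem : ∀ i, i ≤ n → 0 ≤ hjRem Q k i ∧ hjRem Q k i < Q i := by
    intro i hi
    cases i with
    | zero => exact ⟨Int.emod_nonneg _ (hQpos 0 hi).ne', Int.emod_lt_of_pos _ (hQpos 0 hi)⟩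
    | succ i => exact ⟨Int.emod_nonneg _ (hQpos _ hi).ne', Int.emod_lt_of_pos _ (hQpos _ hi)⟩
  have hrem0 : hjRem Q k 0 = k := by
    change k % Q 0 = k
    rw [hQ0]
    exact Int.emod_eq_of_lt hk0.le hkd
  have hremn : hjRem Q k n = 0 := by
    have := hrem n le_rfl
    omega
  have hdig : ∀ i, i < n → ((hjGreedy Q k (i + 1)).toNat : ℤ) * Q (i + 1) + hjRem Q k (i + 1)
      = hjRem Q k i := by
    intro i hi
    have h0 : 0 ≤ hjGreedy Q k (i + 1) := Int.ediv_nonneg (hrem i hi.le).1 (hQpos _ hi).le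
    rw [Int.toNat_of_nonneg h0]
    exact Int.ediv_mul_add_emod _ _
  have hsum : ∀ j, j ≤ n → ∑ i ∈ Finset.Icc 1 j, ((hjGreedy Q k i).toNat : ℤ) * Q i
      = k - hjRem Q k j := by
    intro j
    induction j with
    | zero => intro _; simp [hrem0]
    | succ j ih =>
      intro hj
      rw [Finset.sum_Icc_succ_top (by omega), ih (by omega), ← hdig j hj]
      ring
  intro r s
  constructor
  · rintro ⟨hr, hs, hdvd⟩
    have key : ∀ j, j ≤ n → ∃ ρ σ : ℕ → ℕ → ℤ,
        (∀ i ∈ Finset.Icc 1 j, ∀ l ∈ Finset.range (hjGreedy Q k i).toNat,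
          0 ≤ ρ i l ∧ 0 ≤ σ i l ∧ d ∣ ρ i l + q * σ i l - Q i) ∧
        HJRest d q (hjRem Q k j)
          (r - ∑ i ∈ Finset.Icc 1 j, ∑ l ∈ Finset.range (hjGreedy Q k i).toNat, ρ i l)
          (s - ∑ i ∈ Finset.Icc 1 j, ∑ l ∈ Finset.range (hjGreedy Q k i).toNat, σ i l) := by
      intro j
      induction j with
      | zero =>
        intro _
        refine ⟨0, 0, by simp, ?_⟩
        rw [hrem0]
        refine ⟨by simpa using hr, by simpa using hs, by simpa using hdvd, by omega⟩
      | succ j ih =>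
        intro hj
        obtain ⟨ρ, σ, hmem, hrest⟩ := ih (by omega)
        have hmono := hjDual_mono hC2 j (by omega)
        have hdvd' := hjDual_dvd hQ0 hQ1 hC j (by omega)
        rw [← hdig j hj] at hrest
        obtain ⟨ρ', σ', hmem', hrest'⟩ := HJRest.split_many hd (hQpos _ hj) (hQdec j (by omega))
          hmono.1 hmono.2 (hjDual_det hQ0 hC j (by omega)) hdvd'.1 hdvd'.2 (hrem _ hj).1 _ _ _
          (by rw [hdig j hj]; exact (hrem j (by omega)).2) hrest
        refine ⟨fun i => if i = j + 1 then ρ' else ρ i, fun i => if i = j + 1 then σ' else σ i,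
          ?_, ?_⟩
        · intro i hi l hl
          by_cases hij : i = j + 1
          · subst hij
            simpa using hmem' l hl
          · simpa [hij] using hmem i (by simp at hi ⊢; omega) l hl
        · have hupd : ∀ (f : ℕ → ℕ → ℤ) (f' : ℕ → ℤ),
              ∑ i ∈ Finset.Icc 1 (j + 1), ∑ l ∈ Finset.range (hjGreedy Q k i).toNat,
                (if i = j + 1 then f' else f i) l
              = ∑ i ∈ Finset.Icc 1 j, ∑ l ∈ Finset.range (hjGreedy Q k i).toNat, f i l
                + ∑ l ∈ Finset.range (hjGreedy Q k (j + 1)).toNat, f' l := by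
            intro f f'
            rw [Finset.sum_Icc_succ_top (by omega), if_pos rfl]
            congr 1
            refine Finset.sum_congr rfl fun i hi => ?_
            rw [if_neg (by simp at hi; omega)]
          rw [hupd, hupd, ← sub_sub, ← sub_sub]
          exact hrest'
    obtain ⟨ρ, σ, hmem, -, -, -, hzero⟩ := key n le_rfl
    obtain ⟨h1, h2⟩ := hzero hremn
    exact ⟨ρ, σ, hmem, by omega, by omega⟩
  · rintro ⟨ρ, σ, hmem, rfl, rfl⟩
    refine ⟨Finset.sum_nonneg fun i hi => Finset.sum_nonneg fun l hl => (hmem i hi l hl).1,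
      Finset.sum_nonneg fun i hi => Finset.sum_nonneg fun l hl => (hmem i hi l hl).2.1, ?_⟩
    have hk : k = ∑ i ∈ Finset.Icc 1 n, ∑ l ∈ Finset.range (hjGreedy Q k i).toNat, Q i := by
      have := hsum n le_rfl
      rw [hremn, sub_zero] at this
      simpa using this.symm
    have hall : d ∣ ∑ i ∈ Finset.Icc 1 n, ∑ l ∈ Finset.range (hjGreedy Q k i).toNat,
        (ρ i l + q * σ i l - Q i) :=
      Finset.dvd_sum fun i hi => Finset.dvd_sum fun l hl => (hmem i hi l hl).2.2
    simp only [Finset.sum_sub_distrib, Finset.sum_add_distrib, ← Finset.mul_sum] at hall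
    rwa [← hk] at hall
end

section
/- Let w := d − 1 − q. The greedy X-decomposition of w is (c_1 − 2, c_2 − 2, …, c_n − 2); in particular d − 1 − q = Σ_{i=1}^n (c_i − 2)·q_i, and moreover for every 1 ≤ j ≤ n the tail satisfies Σ_{i=j}^n (c_i − 2)·q_i = q_{j−1} − q_j − 1. (This is the arithmetic content of the decomposition 𝒪_X(w) = ⊗_{i=1}^n 𝒪_X(q_i)^{c_i−2} of the canonical eigenmodule.) -/
/-- The entries of a sequence strictly decreasing to `Q (n + 1) = 0` are nonnegative. -/
lemma hj_nonneg {n : ℕ} {Q : ℕ → ℤ} (hQtop : Q (n + 1) = 0)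
    (hQdec : ∀ i, i ≤ n → Q (i + 1) < Q i) : ∀ i, i ≤ n + 1 → 0 ≤ Q i := by
  intro i hi
  induction hi using Nat.decreasingInduction with
  | self => exact hQtop.ge
  | of_succ k hk ih => exact ih.trans (hQdec k (by omega)).le

/-- One greedy step: dividing `Q i - Q (i + 1) - 1` by `Q (i + 1)` has quotient
`C (i + 1) - 2` and a remainder of the same shape with the index raised by one. -/
lemma hj_step {n : ℕ} {Q C : ℕ → ℤ} (hQtop : Q (n + 1) = 0)
    (hQdec : ∀ i, i ≤ n → Q (i + 1) < Q i)
    (hC : ∀ i, 1 ≤ i → i ≤ n → Q (i - 1) = C i * Q i - Q (i + 1))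
    (i : ℕ) (hi : i + 1 ≤ n) :
    (Q i - Q (i + 1) - 1) / Q (i + 1) = C (i + 1) - 2 ∧
      (Q i - Q (i + 1) - 1) % Q (i + 1) = Q (i + 1) - Q (i + 2) - 1 := by
  have h0 := hj_nonneg hQtop hQdec (i + 2) (by omega)
  have h1 : Q (i + 2) < Q (i + 1) := hQdec (i + 1) hi
  have h2 : Q i = C (i + 1) * Q (i + 1) - Q (i + 2) := hC (i + 1) (by omega) hi
  rw [Int.ediv_emod_unique (by omega)]
  refine ⟨?_, by omega, by omega⟩
  rw [h2]
  ring

lemma hjRem_eq {n : ℕ} {Q C : ℕ → ℤ} (hQtop : Q (n + 1) = 0)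
    (hQdec : ∀ i, i ≤ n → Q (i + 1) < Q i)
    (hC : ∀ i, 1 ≤ i → i ≤ n → Q (i - 1) = C i * Q i - Q (i + 1)) :
    ∀ i, i ≤ n → hjRem Q (Q 0 - 1 - Q 1) i = Q i - Q (i + 1) - 1 := by
  intro i
  induction i with
  | zero =>
    intro _
    have h0 := hj_nonneg hQtop hQdec 1 (by omega)
    have h1 : Q 1 < Q 0 := hQdec 0 (by omega)
    rw [hjRem, Int.emod_eq_of_lt (by omega) (by omega)]
    ring_nf
  | succ i ih =>
    intro hi
    rw [hjRem, ih (by omega)]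
    exact (hj_step hQtop hQdec hC i hi).2

/-- **Hirzebruch–Jung data** of `d/q` for coprime `d > q ≥ 1`:
`q_0 = d > q_1 = q > ⋯ > q_n = 1 > q_{n+1} = 0`, `c_i ≥ 2` with
`q_{i-1} = c_i q_i − q_{i+1}`.

**Statement:** with `w := d − 1 − q`, the greedy `X`-decomposition of `w` is
`(c_1 − 2, …, c_n − 2)`; in particular `d − 1 − q = Σ_{i=1}^n (c_i − 2) q_i`,
and for every `1 ≤ j ≤ n` the tail satisfies
`Σ_{i=j}^n (c_i − 2) q_i = q_{j−1} − q_j − 1`.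
(Arithmetic content of `𝒪_X(w) = ⊗_{i=1}^n 𝒪_X(q_i)^{c_i−2}`.) -/
theorem canonical_greedy_decomposition
    (n : ℕ) (d q : ℤ) (Q C : ℕ → ℤ)
    (hn : 1 ≤ n) (hq1 : 1 ≤ q) (hqd : q < d) (hcop : Int.gcd d q = 1)
    (hQ0 : Q 0 = d) (hQ1 : Q 1 = q) (hQn : Q n = 1) (hQtop : Q (n + 1) = 0)
    (hQdec : ∀ i, i ≤ n → Q (i + 1) < Q i)
    (hC : ∀ i, 1 ≤ i → i ≤ n → Q (i - 1) = C i * Q i - Q (i + 1))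
    (hC2 : ∀ i, 1 ≤ i → i ≤ n → 2 ≤ C i) :
    (∀ i, 1 ≤ i → i ≤ n → hjGreedy Q (d - 1 - q) i = C i - 2) ∧
    (d - 1 - q = ∑ i ∈ Finset.Icc 1 n, (C i - 2) * Q i) ∧
    (∀ j, 1 ≤ j → j ≤ n →
      ∑ i ∈ Finset.Icc j n, (C i - 2) * Q i = Q (j - 1) - Q j - 1) := by
  have tail : ∀ j, 1 ≤ j → j ≤ n →
      ∑ i ∈ Finset.Icc j n, (C i - 2) * Q i = Q (j - 1) - Q j - 1 := by
    intro j hj hjn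
    induction hjn using Nat.decreasingInduction with
    | self =>
      rw [Finset.Icc_self, Finset.sum_singleton, hC n hj le_rfl, hQtop, hQn]
      ring
    | of_succ k hk ih =>
      rw [← Finset.add_sum_Ioc_eq_sum_Icc hk.le, ← Finset.Icc_add_one_left_eq_Ioc,
        ih (by omega), hC k hj hk.le, Nat.add_sub_cancel]
      ring
  refine ⟨?_, ?_, tail⟩
  · intro i hi hin
    obtain ⟨i, rfl⟩ := Nat.exists_eq_add_of_le' hi
    rw [hjGreedy, ← hQ0, ← hQ1, hjRem_eq hQtop hQdec hC i (by omega)]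
    exact (hj_step hQtop hQdec hC i hin).1
  · rw [tail 1 le_rfl hn, Nat.sub_self, hQ0, hQ1]
    ring
end

section
/- Let 0 < k < d with greedy X-decomposition (k_1, …, k_n), let r := min{i : k_i ≠ 0} and s := max{i : k_i ≠ 0}, and assume r < s. Set w := d − 1 − q and let k' be the residue of k + w modulo d, with greedy X-decomposition (ℓ_1, …, ℓ_n). Then: ℓ_i = c_i − 2 for 1 ≤ i ≤ r−2; ℓ_{r−1} = c_{r−1} − 1 (when r ≥ 2); ℓ_r = k_r − 1; ℓ_i = k_i for r < i < s; ℓ_s = k_s − 1; ℓ_{s+1} = c_{s+1} − 1 (when s ≤ n−1); and ℓ_i = c_i − 2 for s+2 ≤ i ≤ n. -/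
/-- One greedy step is determined by any division with remainder of `hjRem Q m i`. -/
lemma greedy_step {Q : ℕ → ℤ} {m : ℤ} {i : ℕ} (a b : ℤ)
    (h : hjRem Q m i = a * Q (i + 1) + b) (hb : 0 ≤ b) (hlt : b < Q (i + 1)) :
    hjGreedy Q m (i + 1) = a ∧ hjRem Q m (i + 1) = b := by
  have hpos : 0 < Q (i + 1) := by linarith
  have hu := (Int.ediv_emod_unique (a := hjRem Q m i) (q := a) (r := b) hpos).2
    ⟨by rw [h]; ring, hb, hlt⟩
  exact hu

lemma hjRem_eq_s10 (Q : ℕ → ℤ) (m : ℤ) (i : ℕ) :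
    hjRem Q m i = hjGreedy Q m (i + 1) * Q (i + 1) + hjRem Q m (i + 1) := by
  have := Int.mul_ediv_add_emod (hjRem Q m i) (Q (i + 1))
  simp only [hjGreedy, hjRem]
  linarith

lemma hjRem_bounds {Q : ℕ → ℤ} (m : ℤ) {i : ℕ} (h : 0 < Q i) :
    0 ≤ hjRem Q m i ∧ hjRem Q m i < Q i := by
  cases i <;> exact ⟨Int.emod_nonneg _ h.ne', Int.emod_lt_of_pos _ h⟩

/-- **Hirzebruch–Jung data** of `d/q` for coprime `d > q ≥ 1`:
`q_0 = d > q_1 = q > ⋯ > q_n = 1 > q_{n+1} = 0`, `c_i ≥ 2` with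
`q_{i-1} = c_i q_i − q_{i+1}`.

**Statement:** let `0 < k < d` have greedy `X`-decomposition `(k_1, …, k_n)`,
let `r = min{i : k_i ≠ 0}`, `s = max{i : k_i ≠ 0}` with `r < s`, set
`w := d − 1 − q`, and let `(ℓ_1, …, ℓ_n)` be the greedy `X`-decomposition of the
residue of `k + w` mod `d`.  Then `ℓ_i = c_i − 2` for `i ≤ r−2`;
`ℓ_{r−1} = c_{r−1} − 1` (if `r ≥ 2`); `ℓ_r = k_r − 1`; `ℓ_i = k_i` for
`r < i < s`; `ℓ_s = k_s − 1`; `ℓ_{s+1} = c_{s+1} − 1` (if `s ≤ n−1`); and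
`ℓ_i = c_i − 2` for `s+2 ≤ i ≤ n`. -/
theorem greedy_decomposition_of_k_plus_w
    (n : ℕ) (d q : ℤ) (Q C : ℕ → ℤ)
    (hn : 1 ≤ n) (hq1 : 1 ≤ q) (hqd : q < d) (hcop : Int.gcd d q = 1)
    (hQ0 : Q 0 = d) (hQ1 : Q 1 = q) (hQn : Q n = 1) (hQtop : Q (n + 1) = 0)
    (hQdec : ∀ i, i ≤ n → Q (i + 1) < Q i)
    (hC : ∀ i, 1 ≤ i → i ≤ n → Q (i - 1) = C i * Q i - Q (i + 1))
    (hC2 : ∀ i, 1 ≤ i → i ≤ n → 2 ≤ C i)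
    (k : ℤ) (hk0 : 0 < k) (hkd : k < d)
    (r s : ℕ) (hr1 : 1 ≤ r) (hsn : s ≤ n) (hrs : r < s)
    (hKr : hjGreedy Q k r ≠ 0) (hKs : hjGreedy Q k s ≠ 0)
    (hbelow : ∀ i, 1 ≤ i → i < r → hjGreedy Q k i = 0)
    (habove : ∀ i, s < i → i ≤ n → hjGreedy Q k i = 0) :
    (∀ i, 1 ≤ i → i + 2 ≤ r →
      hjGreedy Q ((k + (d - 1 - q)) % d) i = C i - 2) ∧
    (2 ≤ r → hjGreedy Q ((k + (d - 1 - q)) % d) (r - 1) = C (r - 1) - 1) ∧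
    (hjGreedy Q ((k + (d - 1 - q)) % d) r = hjGreedy Q k r - 1) ∧
    (∀ i, r < i → i < s →
      hjGreedy Q ((k + (d - 1 - q)) % d) i = hjGreedy Q k i) ∧
    (hjGreedy Q ((k + (d - 1 - q)) % d) s = hjGreedy Q k s - 1) ∧
    (s + 1 ≤ n → hjGreedy Q ((k + (d - 1 - q)) % d) (s + 1) = C (s + 1) - 1) ∧
    (∀ i, s + 2 ≤ i → i ≤ n →
      hjGreedy Q ((k + (d - 1 - q)) % d) i = C i - 2) := by
  -- From here on the first and last nonzero digits sit at the indices `r + 1` and `s + 1`.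
  obtain ⟨r, rfl⟩ : ∃ t, r = t + 1 := ⟨r - 1, by omega⟩
  obtain ⟨s, rfl⟩ : ∃ t, s = t + 1 := ⟨s - 1, by omega⟩
  have hQpos : ∀ i, i ≤ n → 0 < Q i := by
    intro i hi
    induction hi using Nat.decreasingInduction with
    | self => omega
    | of_succ j hj ih => have := hQdec j (by omega); omega
  have hQnn : ∀ i, i ≤ n + 1 → 0 ≤ Q i := by
    intro i hi
    rcases Nat.lt_or_ge i (n + 1) with h | h
    · exact (hQpos i (by omega)).le
    · rw [show i = n + 1 by omega, hQtop]
  have hrec : ∀ i, i + 1 ≤ n → Q i = C (i + 1) * Q (i + 1) - Q (i + 2) := fun i hi =>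
    hC (i + 1) (by omega) hi
  -- The remainder of `k` is `k` itself before step `r + 1`.
  have hRlow : ∀ i, i ≤ r → hjRem Q k i = k := by
    intro i
    induction i with
    | zero => intro _; simp only [hjRem, hQ0]; exact Int.emod_eq_of_lt hk0.le hkd
    | succ j ih =>
      intro hj
      have h := hjRem_eq_s10 Q k j
      rw [hbelow (j + 1) (by omega) (by omega), ih (by omega)] at h
      linarith
  -- The remainder of `k` vanishes from step `s + 1` on.
  have hRhigh : ∀ i, i ≤ n → s + 1 ≤ i → hjRem Q k i = 0 := by
    intro i hi
    induction hi using Nat.decreasingInduction with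
    | self =>
      intro _
      have := hjRem_bounds k (hQpos n le_rfl)
      omega
    | of_succ j hj ih =>
      intro hs
      have h := hjRem_eq_s10 Q k j
      rw [habove (j + 1) (by omega) (by omega), ih (by omega)] at h
      linarith
  have hgnn : ∀ i, i + 1 ≤ n → 0 ≤ hjGreedy Q k (i + 1) := fun i hi =>
    Int.ediv_nonneg (hjRem_bounds k (hQpos i (by omega))).1 (hQpos _ hi).le
  -- The remainder of `k` is positive before step `s + 1`.
  have hRpos : ∀ i, i ≤ s → 1 ≤ hjRem Q k i := by
    intro i hi
    induction hi using Nat.decreasingInduction with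
    | self =>
      have h := hjRem_eq_s10 Q k s
      rw [hRhigh _ hsn le_rfl] at h
      have h1 : 0 < hjGreedy Q k (s + 1) := lt_of_le_of_ne (hgnn s hsn) (Ne.symm hKs)
      have := mul_pos h1 (hQpos _ hsn)
      omega
    | of_succ j hj ih =>
      have h := hjRem_eq_s10 Q k j
      have := mul_nonneg (hgnn j (by omega)) (hQpos (j + 1) (by omega)).le
      omega
  have hklt : ∀ i, i ≤ r → k < Q i := fun i hi => by
    have := (hjRem_bounds k (hQpos i (by omega))).2
    rwa [hRlow i hi] at this
  -- The first nonzero digit together with the positive remainder after it forces `k > Q (r + 1)`.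
  have hkr : Q (r + 1) + 1 ≤ k := by
    have h := hjRem_eq_s10 Q k r
    rw [hRlow r le_rfl] at h
    have h1 : 0 < hjGreedy Q k (r + 1) := lt_of_le_of_ne (hgnn r (by omega)) (Ne.symm hKr)
    have h2 := hRpos (r + 1) (by omega)
    have h3 := hQpos (r + 1) (by omega)
    nlinarith
  generalize hm : (k + (d - 1 - q)) % d = m
  have hm0 : hjRem Q m 0 = m := by
    simp only [hjRem, hQ0, ← hm, Int.emod_emod_of_dvd _ dvd_rfl]
  have hlow : ∀ i, i + 1 ≤ r → hjRem Q m i = k + Q i - Q (i + 1) - 1 := by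
    intro i
    induction i with
    | zero =>
      intro h
      have h1 := hklt 1 h
      rw [hm0, ← hm, hQ0, hQ1, Int.emod_eq_of_lt (by omega) (by omega)]
      ring
    | succ j ih =>
      intro h
      have h1 := hklt (j + 2) (by omega)
      have h2 : Q (j + 2) < Q (j + 1) := hQdec (j + 1) (by omega)
      exact (greedy_step (C (j + 1) - 2) (k + Q (j + 1) - Q (j + 2) - 1)
        (by rw [ih (by omega), hrec j (by omega)]; ring) (by omega) (by omega)).2
  have hlowdig : ∀ i, i + 2 ≤ r → hjGreedy Q m (i + 1) = C (i + 1) - 2 := by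
    intro j h
    have h1 := hklt (j + 2) (by omega)
    have h2 : Q (j + 2) < Q (j + 1) := hQdec (j + 1) (by omega)
    exact (greedy_step (C (j + 1) - 2) (k + Q (j + 1) - Q (j + 2) - 1)
      (by rw [hlow j (by omega), hrec j (by omega)]; ring) (by omega) (by omega)).1
  have hturn : ∀ j, r = j + 1 →
      hjGreedy Q m (j + 1) = C (j + 1) - 1 ∧ hjRem Q m (j + 1) = k - Q (j + 2) - 1 := by
    rintro j rfl
    have h1 := hklt (j + 1) le_rfl
    have h2 := hQnn (j + 2) (by omega)
    have h3 : Q (j + 2) + 1 ≤ k := hkr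
    exact greedy_step _ _ (by rw [hlow j (by omega), hrec j (by omega)]; ring)
      (by omega) (by omega)
  have hr' : hjRem Q m r = k - Q (r + 1) - 1 := by
    rcases Nat.eq_zero_or_pos r with h | h
    · subst h
      simp only [zero_add, hQ1] at hkr ⊢
      -- Here `k > q`, so reduction modulo `d` subtracts `d`.
      rw [hm0, ← hm, show k + (d - 1 - q) = (k - q - 1) + d by ring, Int.add_emod_right,
        Int.emod_eq_of_lt (by omega) (by omega)]
    · obtain ⟨j, rfl⟩ : ∃ j, r = j + 1 := ⟨r - 1, by omega⟩
      exact (hturn j rfl).2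
  have hstepr : hjGreedy Q m (r + 1) = hjGreedy Q k (r + 1) - 1 ∧
      hjRem Q m (r + 1) = hjRem Q k (r + 1) - 1 := by
    have h := hjRem_eq_s10 Q k r
    rw [hRlow r le_rfl] at h
    have h1 := hRpos (r + 1) (by omega)
    have h2 := (hjRem_bounds k (hQpos (r + 1) (by omega))).2
    exact greedy_step _ _ (by rw [hr']; linarith) (by omega) (by omega)
  have hmidstep : ∀ i, i + 1 ≤ s → hjRem Q m i = hjRem Q k i - 1 →
      hjGreedy Q m (i + 1) = hjGreedy Q k (i + 1) ∧
      hjRem Q m (i + 1) = hjRem Q k (i + 1) - 1 := by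
    intro i hi h0
    have h1 := hRpos (i + 1) hi
    have h2 := (hjRem_bounds k (hQpos (i + 1) (by omega))).2
    exact greedy_step _ _ (by rw [h0, hjRem_eq_s10 Q k i]; ring) (by omega) (by omega)
  have hmid : ∀ i, r + 1 ≤ i → i ≤ s → hjRem Q m i = hjRem Q k i - 1 := by
    intro i hi
    induction i, hi using Nat.le_induction with
    | base => intro _; exact hstepr.2
    | succ j hj ih => intro h; exact (hmidstep j h (ih (by omega))).2
  have hsteps : hjGreedy Q m (s + 1) = hjGreedy Q k (s + 1) - 1 ∧
      hjRem Q m (s + 1) = Q (s + 1) - 1 := by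
    have h := hjRem_eq_s10 Q k s
    rw [hRhigh _ hsn le_rfl] at h
    have h1 := hQpos (s + 1) hsn
    exact greedy_step _ _ (by rw [hmid s (by omega) le_rfl, h]; ring) (by omega) (by omega)
  have hsteps1 : s + 2 ≤ n → hjGreedy Q m (s + 2) = C (s + 2) - 1 ∧
      hjRem Q m (s + 2) = Q (s + 2) - Q (s + 3) - 1 := by
    intro h
    have h1 : Q (s + 3) < Q (s + 2) := hQdec (s + 2) h
    have h2 := hQnn (s + 3) (by omega)
    exact greedy_step (i := s + 1) _ _ (by rw [hsteps.2, hrec (s + 1) h]; ring)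
      (by omega) (show _ < Q (s + 2) by omega)
  have htailstep : ∀ i, i + 1 ≤ n → hjRem Q m i = Q i - Q (i + 1) - 1 →
      hjGreedy Q m (i + 1) = C (i + 1) - 2 ∧
      hjRem Q m (i + 1) = Q (i + 1) - Q (i + 2) - 1 := by
    intro i hi h0
    have h1 : Q (i + 2) < Q (i + 1) := hQdec (i + 1) hi
    have h2 := hQnn (i + 2) (by omega)
    exact greedy_step _ _ (by rw [h0, hrec i hi]; ring) (by omega) (by omega)
  have htail : ∀ i, s + 2 ≤ i → i ≤ n → hjRem Q m i = Q i - Q (i + 1) - 1 := by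
    intro i hi
    induction i, hi using Nat.le_induction with
    | base => intro h; exact (hsteps1 h).2
    | succ j hj ih => intro h; exact (htailstep j h (ih (by omega))).2
  refine ⟨?_, ?_, hstepr.1, ?_, hsteps.1, fun h => (hsteps1 h).1, ?_⟩
  · intro i hi h
    obtain ⟨j, rfl⟩ : ∃ j, i = j + 1 := ⟨i - 1, by omega⟩
    exact hlowdig j (by omega)
  · intro h
    obtain ⟨j, rfl⟩ : ∃ j, r = j + 1 := ⟨r - 1, by omega⟩
    exact (hturn j rfl).1
  · intro i hi h
    obtain ⟨j, rfl⟩ : ∃ j, i = j + 1 := ⟨i - 1, by omega⟩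
    exact (hmidstep j (by omega) (hmid j (by omega) (by omega))).1
  · intro i hi h
    obtain ⟨j, rfl⟩ : ∃ j, i = j + 1 := ⟨i - 1, by omega⟩
    exact (htailstep j h (htail j (by omega) (by omega))).1
end

section
/- For every 1 ≤ i ≤ n, the greedy X-decomposition of d − q + q_{i+1} has digit c_j − 2 at each position 1 ≤ j ≤ i−1, digit c_i − 1 at position i, and digit 0 at every position beyond i; in particular d − q + q_{i+1} = Σ_{j=1}^{i−1} (c_j − 2)·q_j + (c_i − 1)·q_i. -/
/-- **Hirzebruch–Jung data** of `d/q` for coprime `d > q ≥ 1`: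
`q_0 = d > q_1 = q > ⋯ > q_n = 1 > q_{n+1} = 0`, `c_i ≥ 2` with
`q_{i-1} = c_i q_i − q_{i+1}`.

**Statement:** for every `1 ≤ i ≤ n`, the greedy `X`-decomposition of
`d − q + q_{i+1}` has digit `c_j − 2` at each position `1 ≤ j ≤ i−1`, digit
`c_i − 1` at position `i`, and digit `0` at every position beyond `i`; in
particular `d − q + q_{i+1} = Σ_{j=1}^{i−1} (c_j − 2)·q_j + (c_i − 1)·q_i`. -/
theorem greedy_decomposition_of_d_sub_q_add
    (n : ℕ) (d q : ℤ) (Q C : ℕ → ℤ)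
    (hn : 1 ≤ n) (hq1 : 1 ≤ q) (hqd : q < d) (hcop : Int.gcd d q = 1)
    (hQ0 : Q 0 = d) (hQ1 : Q 1 = q) (hQn : Q n = 1) (hQtop : Q (n + 1) = 0)
    (hQdec : ∀ i, i ≤ n → Q (i + 1) < Q i)
    (hC : ∀ i, 1 ≤ i → i ≤ n → Q (i - 1) = C i * Q i - Q (i + 1))
    (hC2 : ∀ i, 1 ≤ i → i ≤ n → 2 ≤ C i) :
    ∀ i, 1 ≤ i → i ≤ n →
      (∀ j, 1 ≤ j → j + 1 ≤ i → hjGreedy Q (d - q + Q (i + 1)) j = C j - 2) ∧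
      (hjGreedy Q (d - q + Q (i + 1)) i = C i - 1) ∧
      (∀ j, i < j → j ≤ n → hjGreedy Q (d - q + Q (i + 1)) j = 0) ∧
      (d - q + Q (i + 1)
        = (∑ j ∈ Finset.Icc 1 (i - 1), (C j - 2) * Q j) + (C i - 1) * Q i) := by
  intro i hi1 hin
  have hanti : ∀ a b, a < b → b ≤ n + 1 → Q b < Q a := by
    intro a b hab
    induction b, hab using Nat.le_induction with
    | base => intro h; exact hQdec a (by omega)
    | succ m hm ih => intro h; exact (hQdec m (by omega)).trans (ih (by omega))
  have hnonneg : 0 ≤ Q (i + 1) := by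
    rcases Nat.lt_or_ge i n with h | h
    · have := hanti (i + 1) (n + 1) (by omega) le_rfl
      omega
    · obtain rfl : i = n := by omega
      omega
  have hpos : ∀ j, j ≤ n → 0 < Q j := by
    intro j hj
    have := hanti j (n + 1) (by omega) le_rfl
    omega
  have hrec : ∀ j, j < n → Q j = C (j + 1) * Q (j + 1) - Q (j + 2) :=
    fun j hj => hC (j + 1) (by omega) (by omega)
  have hbound : ∀ j, j < i →
      0 ≤ Q j - Q (j + 1) + Q (i + 1) ∧ Q j - Q (j + 1) + Q (i + 1) < Q j := by
    intro j hj
    have h1 := hQdec j (by omega)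
    have h2 := hanti (j + 1) (i + 1) (by omega) (by omega)
    constructor <;> omega
  set k := d - q + Q (i + 1) with hk
  have hsplit : ∀ j, j + 1 < i → Q j - Q (j + 1) + Q (i + 1) =
      (Q (j + 1) - Q (j + 2) + Q (i + 1)) + (C (j + 1) - 2) * Q (j + 1) := by
    intro j hj
    linear_combination hrec j (by omega)
  have hrem : ∀ j, j < i → hjRem Q k j = Q j - Q (j + 1) + Q (i + 1) := by
    intro j
    induction j with
    | zero =>
      intro hj
      have hb := hbound 0 hj
      have hk0 : k = Q 0 - Q (0 + 1) + Q (i + 1) := by rw [hk, hQ0, zero_add, hQ1]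
      rw [hjRem, hk0, Int.emod_eq_of_lt hb.1 hb.2]
    | succ j ih =>
      intro hj
      have hb := hbound (j + 1) hj
      rw [hjRem, ih (by omega), hsplit j hj, Int.add_mul_emod_self_right,
        Int.emod_eq_of_lt hb.1 hb.2]
  obtain ⟨m, rfl⟩ : ∃ m, i = m + 1 := ⟨i - 1, by omega⟩
  have hlast : hjRem Q k m = (C (m + 1) - 1) * Q (m + 1) := by
    rw [hrem m (by omega)]
    linear_combination hrec m (by omega)
  have hzero : ∀ j, m + 1 ≤ j → hjRem Q k j = 0 := by
    intro j hj
    induction j, hj using Nat.le_induction with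
    | base => rw [hjRem, hlast, Int.mul_emod_left]
    | succ j hj ih => rw [hjRem, ih, Int.zero_emod]
  have hsum : ∀ j, j ≤ n →
      d - q = (∑ l ∈ Finset.Icc 1 j, (C l - 2) * Q l) + (Q j - Q (j + 1)) := by
    intro j
    induction j with
    | zero => intro _; simp [hQ0, hQ1]
    | succ j ih =>
      intro hj
      rw [Finset.sum_Icc_succ_top (by omega)]
      linear_combination ih (by omega) + hrec j (by omega)
  refine ⟨?_, ?_, ?_, ?_⟩
  · intro j hj1 hj
    obtain ⟨j, rfl⟩ : ∃ l, j = l + 1 := ⟨j - 1, by omega⟩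
    have hb := hbound (j + 1) (by omega)
    rw [hjGreedy, hrem j (by omega), hsplit j (by omega),
      Int.add_mul_ediv_right _ _ (hpos (j + 1) (by omega)).ne', Int.ediv_eq_zero_of_lt hb.1 hb.2,
      zero_add]
  · rw [hjGreedy, hlast, Int.mul_ediv_cancel _ (hpos (m + 1) hin).ne']
  · intro j hj _
    obtain ⟨j, rfl⟩ : ∃ l, j = l + 1 := ⟨j - 1, by omega⟩
    rw [hjGreedy, hzero j (by omega), Int.zero_ediv]
  · rw [Nat.add_sub_cancel]
    linear_combination hk + hsum m (by omega) + hrec m (by omega)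
end
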